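/- arXiv:math/0511018 — 2 statements merged into one kernel-verified Lean document; each statement's English description precedes it below -/
import Mathlib

section
/- Let Ω ⊂ ℂⁿ be a bounded open set with a smooth real-valued defining function r on an open neighborhood of the closure of Ω, i.e. Ω = {r < 0} and ∇r ≠ 0 on {r = 0}. Let 1 ≤ q ≤ n and s ∈ (0,1), and suppose there is c > 0 such that i∂∂̄(−(−r)^s)(u,u)(z) ≥ c·(−r(z))^s·|u|² for every z ∈ Ω and every (0,q)-coefficient system u. Then there exists C > 0 such that for every smooth (0,q)-form u with compactly supported coefficients on Ω: ∫_Ω (−r)^{s−2} Σ'_{|J|=q−1} |Σ_{l=1}^n (∂r/∂z_l) u_{lJ}|² dV ≤ C ( ∫_Ω (−r)^s |∂̄u|² dV + ∫_Ω (−r)^s |ϑu|² dV ). (This is the ∂̄-Hardy inequality of Proposition 3.3 for compactly supported forms.) -/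
open scoped BigOperators
open MeasureTheory

namespace HM

/-- The finset of strictly increasing multi-indices of length `q` with entries in `Fin n`. -/
def Incr (n q : ℕ) : Finset (Fin q → Fin n) :=
  Finset.univ.filter (fun I => ∀ a b : Fin q, a < b → I a < I b)

/-- Prepend the index `k` to a `(q-1)`-tuple `J`, giving the `q`-tuple `kJ`. -/
def cons' {n : ℕ} (q : ℕ) (k : Fin n) (J : Fin (q - 1) → Fin n) : Fin q → Fin n :=
  fun i => if h : (i : ℕ) = 0 then k else J ⟨(i : ℕ) - 1, by have := i.isLt; omega⟩

/-- A (0,q)-coefficient system: an antisymmetric assignment of complex numbers to q-tuples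
(hence vanishing on tuples with a repeated index). -/
def IsCoeff {n q : ℕ} (u : (Fin q → Fin n) → ℂ) : Prop :=
  ∀ (σ : Equiv.Perm (Fin q)) (I : Fin q → Fin n),
    u (I ∘ σ) = ((Equiv.Perm.sign σ : ℤ) : ℂ) * u I

/-- `|u|²`, the sum of `|u_I|²` over strictly increasing multi-indices `I`. -/
noncomputable def nSq {n q : ℕ} (u : (Fin q → Fin n) → ℂ) : ℝ :=
  ∑ I ∈ Incr n q, ‖u I‖ ^ 2

/-- The Hessian form of a matrix `H` on coefficient systems:
`H(u,v) = Σ'_{|J|=q-1} Σ_{k,l} H_{lk} u_{lJ} conj(v_{kJ})`. -/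
noncomputable def mForm {n : ℕ} (q : ℕ) (H : Matrix (Fin n) (Fin n) ℂ)
    (u v : (Fin q → Fin n) → ℂ) : ℂ :=
  ∑ J ∈ Incr n (q - 1), ∑ k : Fin n, ∑ l : Fin n,
    H l k * u (cons' q l J) * star (v (cons' q k J))

/-- `σ^I_J`: the sign of the permutation rearranging `I` into `J`; `0` if `J` is not a
rearrangement of `I` (in particular `0` if `I` has a repeated entry). -/
def permSign {n p : ℕ} (I J : Fin p → Fin n) : ℤ :=
  if Function.Injective I then
    ∑ π : Equiv.Perm (Fin p), if J = I ∘ π then ((Equiv.Perm.sign π : ℤ)) else 0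
  else 0

/-- The Wirtinger derivative `∂f/∂z_k` of a complex-valued function, via real Fréchet
derivatives: `½(∂f/∂x_k − i ∂f/∂y_k)`. -/
noncomputable def dz {n : ℕ} (f : (Fin n → ℂ) → ℂ) (k : Fin n) (z : Fin n → ℂ) : ℂ :=
  (1/2 : ℂ) * (fderiv ℝ f z (Pi.single k 1) - Complex.I * fderiv ℝ f z (Pi.single k Complex.I))

/-- The Wirtinger derivative `∂f/∂z̄_k`: `½(∂f/∂x_k + i ∂f/∂y_k)`. -/
noncomputable def dzbar {n : ℕ} (f : (Fin n → ℂ) → ℂ) (k : Fin n) (z : Fin n → ℂ) : ℂ :=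
  (1/2 : ℂ) * (fderiv ℝ f z (Pi.single k 1) + Complex.I * fderiv ℝ f z (Pi.single k Complex.I))

/-- The mixed Wirtinger Hessian `∂²f/∂z_l∂z̄_k` of a real-valued function. -/
noncomputable def hessW {n : ℕ} (f : (Fin n → ℂ) → ℝ) (l k : Fin n) (z : Fin n → ℂ) : ℂ :=
  dz (fun w => dzbar (fun y => (f y : ℂ)) k w) l z

/-- The Hessian form `i∂∂̄f(u,u)(z) = Σ'_{|J|=q-1} Σ_{k,l} ∂²f/∂z_l∂z̄_k(z) u_{lJ} conj(u_{kJ})`. -/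
noncomputable def hForm {n : ℕ} (q : ℕ) (f : (Fin n → ℂ) → ℝ)
    (u : (Fin q → Fin n) → ℂ) (z : Fin n → ℂ) : ℂ :=
  ∑ J ∈ Incr n (q - 1), ∑ k : Fin n, ∑ l : Fin n,
    hessW f l k z * u (cons' q l J) * star (u (cons' q k J))

/-- Coefficient of `∂̄u` on the `(q+1)`-tuple `M`:
`(∂̄u)_M = Σ_k Σ'_{|J|=q} σ^{kJ}_M ∂u_J/∂z̄_k`. -/
noncomputable def dbarC {n : ℕ} (q : ℕ) (u : (Fin q → Fin n) → (Fin n → ℂ) → ℂ)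
    (M : Fin (q + 1) → Fin n) (z : Fin n → ℂ) : ℂ :=
  ∑ k : Fin n, ∑ J ∈ Incr n q, ((permSign (cons' (q + 1) k J) M : ℤ) : ℂ) * dzbar (u J) k z

/-- Coefficient of `ϑu` on the `(q-1)`-tuple `J`: `(ϑu)_J = −Σ_l ∂u_{lJ}/∂z_l`. -/
noncomputable def thetaC {n : ℕ} (q : ℕ) (u : (Fin q → Fin n) → (Fin n → ℂ) → ℂ)
    (J : Fin (q - 1) → Fin n) (z : Fin n → ℂ) : ℂ :=
  -∑ l : Fin n, dz (u (cons' q l J)) l z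

/-- Pointwise `|∂̄u|²`. -/
noncomputable def dbarSq {n : ℕ} (q : ℕ) (u : (Fin q → Fin n) → (Fin n → ℂ) → ℂ)
    (z : Fin n → ℂ) : ℝ :=
  ∑ M ∈ Incr n (q + 1), ‖dbarC q u M z‖ ^ 2

/-- Pointwise `|ϑu|²`. -/
noncomputable def thetaSq {n : ℕ} (q : ℕ) (u : (Fin q → Fin n) → (Fin n → ℂ) → ℂ)
    (z : Fin n → ℂ) : ℝ :=
  ∑ J ∈ Incr n (q - 1), ‖thetaC q u J z‖ ^ 2

/-- Remove the `i`-th entry of a `j`-tuple, giving a `(j-1)`-tuple. -/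
def removeIdx {n j : ℕ} (I : Fin j → Fin n) (i : Fin j) : Fin (j - 1) → Fin n :=
  fun t => if (t : ℕ) < (i : ℕ) then I ⟨t, by have := t.isLt; omega⟩
    else I ⟨(t : ℕ) + 1, by have := t.isLt; omega⟩

/-- The increasing `j`-tuple listing a finset `S` (with default `d` out of range). -/
def sortedTuple {n : ℕ} (j : ℕ) (S : Finset (Fin n)) (d : Fin n) : Fin j → Fin n :=
  fun t => (S.sort (· ≤ ·)).getD t d

end HM

namespace HM

lemma mem_Incr {n p : ℕ} {I : Fin p → Fin n} : I ∈ Incr n p ↔ StrictMono I := by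
  simp [Incr, StrictMono]

lemma cons'_eq {n p : ℕ} (k : Fin n) (J : Fin p → Fin n) :
    cons' (p + 1) k J = (Fin.cons k J : Fin (p + 1) → Fin n) := by
  funext i
  refine Fin.cases ?_ (fun j => ?_) i
  · simp [cons']
  · simp [cons']

lemma coeff_zero {n p : ℕ} {u : (Fin p → Fin n) → ℂ} (hu : IsCoeff u) {I : Fin p → Fin n}
    (hI : ¬ Function.Injective I) : u I = 0 := by
  simp only [Function.Injective, not_forall] at hI
  obtain ⟨a, b, hab, hne⟩ := hI
  have h := hu (Equiv.swap a b) I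
  have h2 : I ∘ (Equiv.swap a b) = I := by
    funext i
    simp only [Function.comp, Equiv.swap_apply_def]
    split_ifs with h1 h2
    · rw [h1, hab]
    · rw [h2, hab]
    · rfl
  rw [h2, Equiv.Perm.sign_swap hne] at h
  have : u I = - u I := by simpa using h
  linear_combination (1/2 : ℂ) * this

lemma sum_all {M : Type*} [AddCommMonoid M] {n p : ℕ} (F : (Fin p → Fin n) → M)
    (hs : ∀ (σ : Equiv.Perm (Fin p)) I, F (I ∘ σ) = F I)
    (h0 : ∀ I, ¬ Function.Injective I → F I = 0) :
    ∑ I, F I = p.factorial • ∑ I ∈ Incr n p, F I := by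
  classical
  have h1 : ∑ I, F I = ∑ I ∈ Finset.univ.filter (fun I : Fin p → Fin n => Function.Injective I), F I := by
    symm
    apply Finset.sum_subset (Finset.filter_subset _ _)
    intro I _ hI
    exact h0 I (by simpa using hI)
  have h2 : ∑ x ∈ (Finset.univ : Finset (Equiv.Perm (Fin p))) ×ˢ Incr n p, F x.2
      = ∑ I ∈ Finset.univ.filter (fun I : Fin p → Fin n => Function.Injective I), F I := by
    refine Finset.sum_bij (fun x _ => x.2 ∘ x.1) ?_ ?_ ?_ ?_
    · rintro ⟨σ, I⟩ h
      simp only [Finset.mem_product, mem_Incr] at h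
      simpa using h.2.injective
    · rintro ⟨σ, I⟩ h ⟨τ, K⟩ h' e
      simp only [Finset.mem_product, mem_Incr] at h h'
      simp only at e
      have hr : Set.range I = Set.range K := by
        rw [← σ.surjective.range_comp I, e, τ.surjective.range_comp K]
      have hIK : I = K := (h.2.range_inj h'.2).1 hr
      subst hIK
      have : σ = τ := by
        ext i
        have := congrFun e i
        exact congrArg _ (h.2.injective this)
      rw [this]
    · intro I hI
      have hI : Function.Injective I := by simpa using hI
      refine ⟨((Tuple.sort I)⁻¹, I ∘ Tuple.sort I), ?_, ?_⟩
      · simp only [Finset.mem_product, mem_Incr, Finset.mem_univ, true_and]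
        exact (Tuple.monotone_sort I).strictMono_of_injective
          (hI.comp (Tuple.sort I).injective)
      · funext i; simp
    · rintro ⟨σ, I⟩ _
      exact (hs σ I).symm
  rw [h1, ← h2, Finset.sum_product]
  simp [Fintype.card_perm]

/-- antisymmetric in the tail -/
def TA {n q : ℕ} (D : (Fin (q + 1) → Fin n) → ℂ) : Prop :=
  ∀ (e : Equiv.Perm (Fin q)) (k : Fin n) (J : Fin q → Fin n),
    D (Fin.cons k (J ∘ e)) = ((Equiv.Perm.sign e : ℤ) : ℂ) * D (Fin.cons k J)

/-- alternation -/
noncomputable def altB {n q : ℕ} (D : (Fin (q + 1) → Fin n) → ℂ) (M : Fin (q + 1) → Fin n) : ℂ :=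
  ∑ j : Fin (q + 1), (if j = 0 then (1 : ℂ) else -1) * D (M ∘ Equiv.swap 0 j)

lemma TA.apply {n q : ℕ} {D : (Fin (q + 1) → Fin n) → ℂ} (h : TA D) (e : Equiv.Perm (Fin q))
    (M : Fin (q + 1) → Fin n) :
    D (M ∘ Equiv.Perm.decomposeFin.symm (0, e)) = ((Equiv.Perm.sign e : ℤ) : ℂ) * D M := by
  have := h e (M 0) (Fin.tail M)
  rw [Fin.cons_self_tail] at this
  rw [← this]
  congr 1
  funext i
  refine Fin.cases ?_ (fun j => ?_) i
  · simp
  · simp [Fin.tail]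

lemma altB_eq {n q : ℕ} {D : (Fin (q + 1) → Fin n) → ℂ} (h : TA D) (M : Fin (q + 1) → Fin n) :
    ∑ π : Equiv.Perm (Fin (q + 1)), ((Equiv.Perm.sign π : ℤ) : ℂ) * D (M ∘ π)
      = (q.factorial : ℂ) * altB D M := by
  rw [← Equiv.sum_comp Equiv.Perm.decomposeFin.symm, Fintype.sum_prod_type, altB, Finset.mul_sum]
  refine Finset.sum_congr rfl fun j _ => ?_
  have : ∀ e : Equiv.Perm (Fin q), ((Equiv.Perm.sign (Equiv.Perm.decomposeFin.symm (j, e)) : ℤ) : ℂ)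
      * D (M ∘ Equiv.Perm.decomposeFin.symm (j, e))
      = (if j = 0 then (1 : ℂ) else -1) * D (M ∘ Equiv.swap 0 j) := by
    intro e
    have h1 : M ∘ Equiv.Perm.decomposeFin.symm (j, e)
        = (M ∘ Equiv.swap 0 j) ∘ Equiv.Perm.decomposeFin.symm (0, e) := by
      funext i
      refine Fin.cases ?_ (fun j => ?_) i
      · simp
      · simp
    rw [h1, h.apply, Equiv.Perm.decomposeFin.symm_sign]
    have hs : ((Equiv.Perm.sign e : ℤ) : ℂ) * ((Equiv.Perm.sign e : ℤ) : ℂ) = 1 := by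
      rcases Int.units_eq_one_or (Equiv.Perm.sign e) with h | h <;> simp [h]
    split_ifs
    · push_cast; linear_combination D (M ∘ Equiv.swap 0 j) * hs
    · push_cast; linear_combination - D (M ∘ Equiv.swap 0 j) * hs
  rw [Finset.sum_congr rfl fun e _ => this e]
  simp [Fintype.card_perm]

lemma sign_sq {m : ℕ} (e : Equiv.Perm (Fin m)) :
    ((Equiv.Perm.sign e : ℤ) : ℂ) * ((Equiv.Perm.sign e : ℤ) : ℂ) = 1 := by
  rcases Int.units_eq_one_or (Equiv.Perm.sign e) with h | h <;> simp [h]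

lemma altB_coeff {n q : ℕ} {D : (Fin (q + 1) → Fin n) → ℂ} (h : TA D) : IsCoeff (altB D) := by
  intro σ M
  have hq : (q.factorial : ℂ) ≠ 0 := by exact_mod_cast q.factorial_ne_zero
  apply mul_left_cancel₀ hq
  rw [← altB_eq h, mul_left_comm, ← altB_eq h, Finset.mul_sum]
  conv_rhs => rw [← Equiv.sum_comp (Equiv.mulLeft σ)]
  refine Finset.sum_congr rfl fun π _ => ?_
  simp only [Equiv.coe_mulLeft, Equiv.Perm.sign_mul, Equiv.Perm.coe_mul, Function.comp_assoc]
  push_cast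
  linear_combination (-((Equiv.Perm.sign π : ℤ) : ℂ) * D (M ∘ σ ∘ π)) * sign_sq σ

lemma sum_cons {A : Type*} [AddCommMonoid A] {n q : ℕ} (F : (Fin (q + 1) → Fin n) → A) :
    ∑ I, F I = ∑ k : Fin n, ∑ J : Fin q → Fin n, F (Fin.cons k J) := by
  rw [← Equiv.sum_comp (Fin.consEquiv (fun _ : Fin (q + 1) => Fin n)), Fintype.sum_prod_type]
  rfl

lemma permSign_of_inj {n p : ℕ} (I M : Fin p → Fin n) (hM : Function.Injective M) :
    permSign I M = ∑ π : Equiv.Perm (Fin p), if M = I ∘ π then ((Equiv.Perm.sign π : ℤ)) else 0 := by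
  unfold permSign
  split_ifs with h
  · rfl
  · symm
    apply Finset.sum_eq_zero
    intro π _
    rw [if_neg]
    rintro rfl
    apply h
    have := hM.comp π.symm.injective
    simpa [Function.comp_def] using this

lemma permSign_comp {n p : ℕ} (I M : Fin p → Fin n) (hM : Function.Injective M)
    (σ : Equiv.Perm (Fin p)) :
    permSign (I ∘ σ) M = (Equiv.Perm.sign σ : ℤ) * permSign I M := by
  rw [permSign_of_inj _ _ hM, permSign_of_inj _ _ hM, Finset.mul_sum]
  conv_rhs => rw [← Equiv.sum_comp (Equiv.mulLeft σ)]
  refine Finset.sum_congr rfl fun π _ => ?_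
  simp only [Equiv.coe_mulLeft, Equiv.Perm.sign_mul, Equiv.Perm.coe_mul, Function.comp_assoc]
  split_ifs
  · rcases Int.units_eq_one_or (Equiv.Perm.sign σ) with h | h <;> simp [h]
  · simp

lemma cons_comp_decompose {n q : ℕ} (k : Fin n) (J : Fin q → Fin n) (e : Equiv.Perm (Fin q)) :
    (Fin.cons k (J ∘ e) : Fin (q + 1) → Fin n)
      = (Fin.cons k J : Fin (q + 1) → Fin n) ∘ Equiv.Perm.decomposeFin.symm (0, e) := by
  funext i
  refine Fin.cases ?_ (fun j => ?_) i
  · simp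
  · simp

lemma dbar_alt {n q : ℕ} (U : (Fin q → Fin n) → Fin n → ℂ) (hU : ∀ k, IsCoeff (fun I => U I k))
    (M : Fin (q + 1) → Fin n) (hM : Function.Injective M) :
    ∑ k : Fin n, ∑ J ∈ Incr n q, ((permSign (cons' (q + 1) k J) M : ℤ) : ℂ) * U J k
      = altB (fun I => U (Fin.tail I) (I 0)) M := by
  have hq : (q.factorial : ℂ) ≠ 0 := by exact_mod_cast q.factorial_ne_zero
  apply mul_left_cancel₀ hq
  have hTA : TA (fun I : Fin (q + 1) → Fin n => U (Fin.tail I) (I 0)) := by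
    intro e k J
    simpa using hU k e J
  rw [← altB_eq hTA, Finset.mul_sum]
  have h1 : ∀ k : Fin n, (q.factorial : ℂ) *
      ∑ J ∈ Incr n q, ((permSign (cons' (q + 1) k J) M : ℤ) : ℂ) * U J k
      = ∑ J : Fin q → Fin n, ((permSign (Fin.cons k J : Fin (q + 1) → Fin n) M : ℤ) : ℂ) * U J k := by
    intro k
    rw [sum_all]
    · simp [cons'_eq]
    · intro σ I
      have := hU k σ I
      simp only at this
      rw [this, cons_comp_decompose, permSign_comp _ _ hM, Equiv.Perm.decomposeFin.symm_sign]
      push_cast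
      simp only [if_true, Units.val_one, Int.cast_one, one_mul]
      linear_combination (permSign (Fin.cons k I : Fin (q + 1) → Fin n) M : ℂ) * U I k * sign_sq σ
    · intro I hI
      have : U I k = 0 := coeff_zero (hU k) hI
      rw [this, mul_zero]
  rw [Finset.sum_congr rfl fun k _ => h1 k]
  have h2 := sum_cons (fun I : Fin (q + 1) → Fin n => ((permSign I M : ℤ) : ℂ) * U (Fin.tail I) (I 0))
  simp only [Fin.tail_cons, Fin.cons_zero] at h2
  rw [← h2]
  simp only [permSign_of_inj _ _ hM]
  push_cast
  simp only [Finset.sum_mul]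
  rw [Finset.sum_comm]
  conv_rhs => rw [← Equiv.sum_comp (Equiv.inv _)]
  refine Finset.sum_congr rfl fun π _ => ?_
  rw [Finset.sum_eq_single (M ∘ (π⁻¹ : Equiv.Perm _))]
  · rw [if_pos]
    · simp
    · funext i; simp
  · intro I _ hI
    rw [if_neg]
    · simp
    · rintro rfl
      apply hI
      funext i; simp
  · simp

lemma norm_alt {n p : ℕ} {D : (Fin (p + 1 + 1) → Fin n) → ℂ} (h : TA D) :
    ((p + 1).factorial : ℂ) * ∑ M ∈ Incr n (p + 1 + 1), altB D M * star (altB D M)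
      = ∑ M, D M * star (D M) - ((p : ℂ) + 1) * ∑ M, D M * star (D (M ∘ Equiv.swap 0 1)) := by
  have hB := altB_coeff h
  have hf : ((p + 1 + 1).factorial : ℂ) ≠ 0 := by exact_mod_cast Nat.factorial_ne_zero _
  have h1 : ∑ M, altB D M * star (altB D M)
      = ((p + 1 + 1).factorial : ℂ) * ∑ M ∈ Incr n (p + 1 + 1), altB D M * star (altB D M) := by
    rw [sum_all]
    · simp
    · intro σ I
      rw [hB]
      simp only [star_mul', star_intCast]
      linear_combination altB D I * star (altB D I) * sign_sq σ
    · intro I hI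
      rw [coeff_zero hB hI, zero_mul]
  have h2 : ((p + 1).factorial : ℂ) * ∑ M, altB D M * star (altB D M)
      = ((p + 1 + 1).factorial : ℂ) * ∑ M, D M * star (altB D M) := by
    rw [Finset.mul_sum]
    have : ∀ M, ((p + 1).factorial : ℂ) * (altB D M * star (altB D M))
      = ∑ π : Equiv.Perm (Fin (p + 1 + 1)), D (M ∘ π) * star (altB D (M ∘ π)) := by
      intro M
      rw [← mul_assoc, ← altB_eq h, Finset.sum_mul]
      refine Finset.sum_congr rfl fun π _ => ?_
      rw [hB]
      simp only [star_mul', star_intCast]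
      ring
    rw [Finset.sum_congr rfl fun M _ => this M, Finset.sum_comm]
    have : ∀ π : Equiv.Perm (Fin (p + 1 + 1)), ∑ M : Fin (p + 1 + 1) → Fin n, D (M ∘ π) * star (altB D (M ∘ π))
        = ∑ M, D M * star (altB D M) := by
      intro π
      exact Equiv.sum_comp (Equiv.arrowCongr π.symm (Equiv.refl (Fin n))) (fun M => D M * star (altB D M))
    rw [Finset.sum_congr rfl fun π _ => this π]
    simp [Fintype.card_perm]
  have h3 : ((p + 1).factorial : ℂ) * ∑ M ∈ Incr n (p + 1 + 1), altB D M * star (altB D M)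
      = ∑ M, D M * star (altB D M) := by
    apply mul_left_cancel₀ hf
    rw [← h2, h1]; ring
  rw [h3]
  have h4 : ∀ j : Fin (p + 1), ∑ M, D M * star (D (M ∘ Equiv.swap 0 j.succ))
      = ∑ M, D M * star (D (M ∘ Equiv.swap 0 1)) := by
    intro j
    set τ : Equiv.Perm (Fin (p + 1 + 1)) := Equiv.Perm.decomposeFin.symm (0, Equiv.swap 0 j) with hτ
    rw [← Equiv.sum_comp (Equiv.arrowCongr τ.symm (Equiv.refl (Fin n)))]
    refine Finset.sum_congr rfl fun M _ => ?_
    have e1 : (Equiv.arrowCongr τ.symm (Equiv.refl (Fin n))) M = M ∘ τ := rfl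
    have e2 : (M ∘ τ) ∘ Equiv.swap 0 j.succ = (M ∘ Equiv.swap 0 1) ∘ τ := by
      have := Equiv.mul_swap_eq_swap_mul τ 0 j.succ
      have t0 : τ 0 = 0 := by simp [hτ]
      have t1 : τ j.succ = 1 := by simp [hτ]
      rw [t0, t1] at this
      rw [Function.comp_assoc, Function.comp_assoc, ← Equiv.Perm.coe_mul, this, Equiv.Perm.coe_mul]
    rw [e1, e2, hτ, h.apply, h.apply]
    simp only [star_mul', star_intCast]
    linear_combination D M * star (D (M ∘ Equiv.swap 0 1)) * sign_sq (Equiv.swap 0 j)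
  have h5 : ∀ M, star (altB D M) = star (D M) - ∑ j : Fin (p + 1), star (D (M ∘ Equiv.swap 0 j.succ)) := by
    intro M
    rw [altB, Fin.sum_univ_succ]
    simp [Fin.succ_ne_zero, sub_eq_add_neg]
  simp only [h5, mul_sub, Finset.sum_sub_distrib, Finset.mul_sum]
  rw [Finset.sum_comm, Finset.sum_congr rfl fun j _ => h4 j]
  simp [Finset.mul_sum]

end HM

namespace HM

lemma dbarSq_ge {n p : ℕ} (U : (Fin (p + 1) → Fin n) → Fin n → ℂ)
    (hU : ∀ k, IsCoeff (fun I => U I k)) :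
    -(∑ K ∈ Incr n p, ∑ k : Fin n, ∑ l : Fin n,
        U (cons' (p + 1) l K) k * star (U (cons' (p + 1) k K) l)).re
    ≤ ∑ M ∈ Incr n (p + 1 + 1), ‖∑ k : Fin n, ∑ J ∈ Incr n (p + 1),
        ((permSign (cons' (p + 1 + 1) k J) M : ℤ) : ℂ) * U J k‖ ^ 2 := by
  have hTA : TA (fun I : Fin (p + 1 + 1) → Fin n => U (Fin.tail I) (I 0)) := by
    intro e k J
    simpa using hU k e J
  have h := norm_alt hTA
  have h1 : ∑ M ∈ Incr n (p + 1 + 1), ‖∑ k : Fin n, ∑ J ∈ Incr n (p + 1),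
        ((permSign (cons' (p + 1 + 1) k J) M : ℤ) : ℂ) * U J k‖ ^ 2
      = (∑ M ∈ Incr n (p + 1 + 1), altB (fun I => U (Fin.tail I) (I 0)) M
          * star (altB (fun I => U (Fin.tail I) (I 0)) M)).re := by
    rw [Complex.re_sum]
    refine Finset.sum_congr rfl fun M hM => ?_
    rw [dbar_alt U hU M (mem_Incr.1 hM).injective, Complex.star_def, Complex.mul_conj,
      Complex.normSq_eq_norm_sq, Complex.ofReal_re]
  have h2 : ∑ M : Fin (p + 1 + 1) → Fin n, U (Fin.tail M) (M 0)
        * star (U (Fin.tail (M ∘ Equiv.swap 0 1)) ((M ∘ Equiv.swap 0 1) 0))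
      = (p.factorial : ℂ) * ∑ K ∈ Incr n p, ∑ k : Fin n, ∑ l : Fin n,
        U (cons' (p + 1) l K) k * star (U (cons' (p + 1) k K) l) := by
    rw [sum_cons]
    simp only [sum_cons (q := p)]
    have e1 : ∀ (k l : Fin n) (K : Fin p → Fin n),
      (Fin.cons k (Fin.cons l K : Fin (p + 1) → Fin n) : Fin (p + 1 + 1) → Fin n) ∘ Equiv.swap 0 1
        = Fin.cons l (Fin.cons k K : Fin (p + 1) → Fin n) := by
      intro k l K
      funext i
      refine Fin.cases ?_ (fun j => ?_) i
      · simp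
      · refine Fin.cases ?_ (fun j => ?_) j
        · simp
        · rw [Function.comp_apply, Equiv.swap_apply_of_ne_of_ne]
          · simp
          · exact Fin.succ_ne_zero _
          · intro h
            have := congrArg Fin.val h
            simp at this
    simp only [e1, Fin.tail_cons, Fin.cons_zero]
    have e2 : ∑ k : Fin n, ∑ l : Fin n, ∑ K : Fin p → Fin n,
        U (Fin.cons l K) k * star (U (Fin.cons k K) l)
        = ∑ K : Fin p → Fin n, ∑ k : Fin n, ∑ l : Fin n,
          U (Fin.cons l K) k * star (U (Fin.cons k K) l) := by
      conv_rhs => rw [Finset.sum_comm]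
      refine Finset.sum_congr rfl fun k _ => ?_
      rw [Finset.sum_comm]
    rw [e2, sum_all]
    · simp [cons'_eq]
    · intro σ K
      refine Finset.sum_congr rfl fun k _ => Finset.sum_congr rfl fun l _ => ?_
      have a1 := hU k (Equiv.Perm.decomposeFin.symm (0, σ)) (Fin.cons l K)
      have a2 := hU l (Equiv.Perm.decomposeFin.symm (0, σ)) (Fin.cons k K)
      simp only [← cons_comp_decompose] at a1 a2
      rw [a1, a2]
      simp only [star_mul', star_intCast]
      linear_combination U (Fin.cons l K) k * star (U (Fin.cons k K) l) *
        sign_sq (Equiv.Perm.decomposeFin.symm (0, σ))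
    · intro K hK
      refine Finset.sum_eq_zero fun k _ => Finset.sum_eq_zero fun l _ => ?_
      have : U (Fin.cons l K) k = 0 := coeff_zero (hU k) (fun h => hK (by
        rw [Fin.cons_injective_iff] at h
        exact h.2))
      rw [this, zero_mul]
  have h3 : ((p + 1).factorial : ℂ) = ((p : ℂ) + 1) * p.factorial := by
    rw [Nat.factorial_succ]; push_cast; ring
  rw [h1]
  simp only [h2] at h
  set S := ∑ M ∈ Incr n (p + 1 + 1), altB (fun I => U (Fin.tail I) (I 0)) M
          * star (altB (fun I => U (Fin.tail I) (I 0)) M) with hS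
  set Q := ∑ K ∈ Incr n p, ∑ k : Fin n, ∑ l : Fin n,
        U (cons' (p + 1) l K) k * star (U (cons' (p + 1) k K) l) with hQ
  have h4 : ((p + 1).factorial : ℂ) * (S + Q)
      = ∑ M : Fin (p + 1 + 1) → Fin n, U (Fin.tail M) (M 0) * star (U (Fin.tail M) (M 0)) := by
    linear_combination h + Q * h3
  have h5 := congrArg Complex.re h4
  have h6 : 0 ≤ (∑ M : Fin (p + 1 + 1) → Fin n, U (Fin.tail M) (M 0) * star (U (Fin.tail M) (M 0))).re := by
    rw [Complex.re_sum]
    refine Finset.sum_nonneg fun M _ => ?_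
    rw [Complex.star_def, Complex.mul_conj, Complex.ofReal_re]
    exact Complex.normSq_nonneg _
  rw [← h5, ← Complex.ofReal_natCast, Complex.re_ofReal_mul] at h6
  have h7 : (0 : ℝ) < ((p + 1).factorial : ℝ) := by exact_mod_cast Nat.factorial_pos _
  have h8 := nonneg_of_mul_nonneg_right h6 h7
  rw [Complex.add_re] at h8
  linarith

lemma coeff_norm_le {n p : ℕ} {u : (Fin p → Fin n) → ℂ} (hu : IsCoeff u) (I : Fin p → Fin n) :
    ‖u I‖ ≤ Real.sqrt (∑ J ∈ Incr n p, ‖u J‖ ^ 2) := by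
  by_cases hI : Function.Injective I
  · have h1 : StrictMono (I ∘ Tuple.sort I) := (Tuple.monotone_sort I).strictMono_of_injective
          (hI.comp (Tuple.sort I).injective)
    have h2 : ‖u I‖ = ‖u (I ∘ Tuple.sort I)‖ := by
      rw [hu, norm_mul]
      rcases Int.units_eq_one_or (Equiv.Perm.sign (Tuple.sort I)) with h | h <;> simp [h]
    rw [h2]
    apply Real.le_sqrt_of_sq_le
    exact Finset.single_le_sum (f := fun J => ‖u J‖ ^ 2) (fun J _ => by positivity) (mem_Incr.2 h1)
  · rw [coeff_zero hu hI, norm_zero]; positivity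

lemma contr_coeff {n p : ℕ} {u : (Fin (p + 1) → Fin n) → ℂ} (hu : IsCoeff u) (ξ : Fin n → ℂ) :
    IsCoeff (fun J : Fin p → Fin n => ∑ l, ξ l * u (cons' (p + 1) l J)) := by
  intro σ J
  simp only [cons'_eq, Finset.mul_sum]
  refine Finset.sum_congr rfl fun l _ => ?_
  rw [cons_comp_decompose, hu, Equiv.Perm.decomposeFin.symm_sign]
  simp
  ring

lemma tang {n p : ℕ} {u : (Fin (p + 1) → Fin n) → ℂ} (hu : IsCoeff u) (ξ : Fin n → ℂ)
    (ε X W : ℝ) (hε : 0 < ε) (hξ : ε ≤ ∑ l, ‖ξ l‖ ^ 2) (hX : ∀ l, ‖ξ l‖ ≤ X)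
    (hW : ∀ J, ‖∑ l, ξ l * u (cons' (p + 1) l J)‖ ≤ W) (hX0 : 0 ≤ X) (hW0 : 0 ≤ W) :
    ∃ e : (Fin (p + 1) → Fin n) → ℂ, IsCoeff e ∧
      (∀ J, ∑ l, ξ l * e (cons' (p + 1) l J) = ∑ l, ξ l * u (cons' (p + 1) l J)) ∧
      ∀ I, ‖e I‖ ≤ (((p : ℝ) + 1) * X / ε) * W := by
  set w : (Fin p → Fin n) → ℂ := fun J => ∑ l, ξ l * u (cons' (p + 1) l J) with hw
  have hwc : IsCoeff w := contr_coeff hu ξ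
  set D : (Fin (p + 1) → Fin n) → ℂ := fun I => star (ξ (I 0)) * w (Fin.tail I) with hD
  have hTA : TA D := by
    intro e k J
    simp only [hD, Fin.cons_zero, Fin.tail_cons]
    rw [hwc]; ring
  set A : ℝ := ∑ l, ‖ξ l‖ ^ 2 with hA
  have hA0 : 0 < A := lt_of_lt_of_le hε hξ
  have hAc : (A : ℂ) ≠ 0 := by exact_mod_cast hA0.ne'
  refine ⟨fun I => (A : ℂ)⁻¹ * altB D I, ?_, ?_, ?_⟩
  · intro σ I
    simp only
    rw [altB_coeff hTA]; ring
  · intro J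
    have hz : ∀ j : Fin p, ∑ l, ξ l * w (Function.update J j l) = 0 := by
      intro j
      simp only [hw, Finset.mul_sum]
      have hanti : ∀ l m, u (cons' (p + 1) m (Function.update J j l))
          = - u (cons' (p + 1) l (Function.update J j m)) := by
        intro l m
        have h := hu (Equiv.swap 0 j.succ) (cons' (p + 1) l (Function.update J j m))
        rw [Equiv.Perm.sign_swap (Fin.succ_ne_zero j).symm] at h
        have e1 : cons' (p + 1) l (Function.update J j m) ∘ Equiv.swap 0 j.succ
            = cons' (p + 1) m (Function.update J j l) := by
          simp only [cons'_eq]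
          funext i
          refine Fin.cases ?_ (fun i => ?_) i
          · simp
          · by_cases hij : i = j
            · subst hij; simp [-Fin.cons_update]
            · rw [Function.comp_apply, Equiv.swap_apply_of_ne_of_ne (Fin.succ_ne_zero _)
                (by simpa using hij)]
              simp [hij]
        rw [e1] at h
        simpa using h
      have h2 : ∑ l, ∑ m, ξ l * (ξ m * u (cons' (p + 1) m (Function.update J j l)))
          = - ∑ l, ∑ m, ξ l * (ξ m * u (cons' (p + 1) m (Function.update J j l))) := by
        conv_lhs => rw [Finset.sum_comm]
        rw [← Finset.sum_neg_distrib]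
        refine Finset.sum_congr rfl fun l _ => ?_
        rw [← Finset.sum_neg_distrib]
        refine Finset.sum_congr rfl fun m _ => ?_
        rw [hanti]; ring
      linear_combination (1/2 : ℂ) * h2
    have hB : ∀ l, altB D (cons' (p + 1) l J)
        = star (ξ l) * w J - ∑ j : Fin p, star (ξ (J j)) * w (Function.update J j l) := by
      intro l
      rw [altB, Fin.sum_univ_succ, sub_eq_add_neg, ← Finset.sum_neg_distrib]
      congr 1
      · simp [hD, cons'_eq]
      · refine Finset.sum_congr rfl fun j _ => ?_
        have e1 : (cons' (p + 1) l J) ∘ Equiv.swap 0 j.succ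
          = (Fin.cons (J j) (Function.update J j l) : Fin (p + 1) → Fin n) := by
          simp only [cons'_eq]
          funext i
          refine Fin.cases ?_ (fun i => ?_) i
          · simp
          · by_cases hij : i = j
            · subst hij; simp [-Fin.cons_update]
            · rw [Function.comp_apply, Equiv.swap_apply_of_ne_of_ne (Fin.succ_ne_zero _)
                (by simpa using hij)]
              simp [hij]
        rw [e1]
        simp [hD, Fin.succ_ne_zero, -Fin.cons_update]
    have hAs : (A : ℂ) = ∑ l, ξ l * star (ξ l) := by
      rw [hA]; push_cast
      refine Finset.sum_congr rfl fun l _ => ?_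
      rw [Complex.star_def, Complex.mul_conj, Complex.normSq_eq_norm_sq]; push_cast; rfl
    have h9 : ∑ l, ξ l * ((A : ℂ)⁻¹ * altB D (cons' (p + 1) l J))
        = (A : ℂ)⁻¹ * ((∑ l, ξ l * star (ξ l)) * w J
          - ∑ j : Fin p, star (ξ (J j)) * ∑ l, ξ l * w (Function.update J j l)) := by
      simp only [hB, mul_sub, Finset.sum_sub_distrib, Finset.mul_sum, Finset.sum_mul]
      congr 1
      · refine Finset.sum_congr rfl fun l _ => ?_
        ring
      · rw [Finset.sum_comm]
        refine Finset.sum_congr rfl fun l _ => Finset.sum_congr rfl fun m _ => ?_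
        ring
    rw [h9]
    simp only [hz, mul_zero, Finset.sum_const_zero, sub_zero, ← hAs]
    rw [← mul_assoc, inv_mul_cancel₀ hAc, one_mul]
  · intro I
    rw [norm_mul, norm_inv, Complex.norm_real, Real.norm_of_nonneg hA0.le]
    have h1 : ‖altB D I‖ ≤ ((p : ℝ) + 1) * (X * W) := by
      unfold altB
      refine (norm_sum_le _ _).trans ?_
      have : ∀ j ∈ (Finset.univ : Finset (Fin (p + 1))),
        ‖(if j = 0 then (1 : ℂ) else -1) * D (I ∘ Equiv.swap 0 j)‖ ≤ X * W := by
        intro j _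
        rw [norm_mul]
        have : ‖(if j = 0 then (1 : ℂ) else -1)‖ = 1 := by split_ifs <;> simp
        rw [this, one_mul, hD]
        simp only [norm_mul, norm_star]
        exact mul_le_mul (hX _) (hW _) (norm_nonneg _) hX0
      refine (Finset.sum_le_card_nsmul _ _ _ this).trans ?_
      simp
    have h2 : A⁻¹ ≤ ε⁻¹ := inv_anti₀ hε hξ
    calc A⁻¹ * ‖altB D I‖ ≤ ε⁻¹ * (((p : ℝ) + 1) * (X * W)) :=
          mul_le_mul h2 h1 (norm_nonneg _) (by positivity)
      _ = _ := by field_simp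

end HM

namespace HM

open scoped ContDiff

lemma cd_dz {n : ℕ} {f : (Fin n → ℂ) → ℂ} {z : Fin n → ℂ} (hf : ContDiffAt ℝ ∞ f z) (k : Fin n) :
    ContDiffAt ℝ ∞ (dz f k) z := by
  have h : ContDiffAt ℝ ∞ (fderiv ℝ f) z := hf.fderiv_right (by simp)
  unfold dz
  exact contDiffAt_const.mul ((h.clm_apply contDiffAt_const).sub
    (contDiffAt_const.mul (h.clm_apply contDiffAt_const)))

lemma cd_dzbar {n : ℕ} {f : (Fin n → ℂ) → ℂ} {z : Fin n → ℂ} (hf : ContDiffAt ℝ ∞ f z) (k : Fin n) :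
    ContDiffAt ℝ ∞ (dzbar f k) z := by
  have h : ContDiffAt ℝ ∞ (fderiv ℝ f) z := hf.fderiv_right (by simp)
  unfold dzbar
  exact contDiffAt_const.mul ((h.clm_apply contDiffAt_const).add
    (contDiffAt_const.mul (h.clm_apply contDiffAt_const)))

lemma cd_star {n : ℕ} {f : (Fin n → ℂ) → ℂ} {z : Fin n → ℂ} (hf : ContDiffAt ℝ ∞ f z) :
    ContDiffAt ℝ ∞ (fun w => star (f w)) z :=
  (Complex.conjCLE.contDiff.contDiffAt).comp z hf

lemma da {n : ℕ} {E : Type*} [NormedAddCommGroup E] [NormedSpace ℝ E] {f : (Fin n → ℂ) → E} {z : Fin n → ℂ} (hf : ContDiffAt ℝ ∞ f z) :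
    DifferentiableAt ℝ f z := hf.differentiableAt (by simp)

lemma dz_mul {n : ℕ} {f g : (Fin n → ℂ) → ℂ} {z : Fin n → ℂ} (hf : ContDiffAt ℝ ∞ f z)
    (hg : ContDiffAt ℝ ∞ g z) (k : Fin n) :
    dz (fun w => f w * g w) k z = dz f k z * g z + f z * dz g k z := by
  unfold dz
  rw [fderiv_fun_mul (da hf) (da hg)]
  simp
  ring

lemma dzbar_mul {n : ℕ} {f g : (Fin n → ℂ) → ℂ} {z : Fin n → ℂ} (hf : ContDiffAt ℝ ∞ f z)
    (hg : ContDiffAt ℝ ∞ g z) (k : Fin n) :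
    dzbar (fun w => f w * g w) k z = dzbar f k z * g z + f z * dzbar g k z := by
  unfold dzbar
  rw [fderiv_fun_mul (da hf) (da hg)]
  simp
  ring

lemma fderiv_star' {n : ℕ} {f : (Fin n → ℂ) → ℂ} {z : Fin n → ℂ} (hf : ContDiffAt ℝ ∞ f z) (v : Fin n → ℂ) :
    fderiv ℝ (fun w => star (f w)) z v = star (fderiv ℝ f z v) := by
  have := (Complex.conjCLE.toContinuousLinearMap.hasFDerivAt (x := f z)).comp z (da hf).hasFDerivAt
  have h2 := this.fderiv
  have h3 : (fun w => star (f w)) = (Complex.conjCLE.toContinuousLinearMap) ∘ f := by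
    funext w; simp
  rw [h3, h2]
  simp

lemma dz_star {n : ℕ} {f : (Fin n → ℂ) → ℂ} {z : Fin n → ℂ} (hf : ContDiffAt ℝ ∞ f z) (k : Fin n) :
    dz (fun w => star (f w)) k z = star (dzbar f k z) := by
  unfold dz dzbar
  rw [fderiv_star' hf, fderiv_star' hf]
  simp
  ring

lemma dzbar_star {n : ℕ} {f : (Fin n → ℂ) → ℂ} {z : Fin n → ℂ} (hf : ContDiffAt ℝ ∞ f z) (k : Fin n) :
    dzbar (fun w => star (f w)) k z = star (dz f k z) := by
  unfold dz dzbar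
  rw [fderiv_star' hf, fderiv_star' hf]
  simp

lemma dz_dzbar_comm {n : ℕ} {f : (Fin n → ℂ) → ℂ} {z : Fin n → ℂ} (hf : ContDiffAt ℝ ∞ f z)
    (k l : Fin n) : dz (dzbar f k) l z = dzbar (dz f l) k z := by
  have hs : IsSymmSndFDerivAt ℝ f z := hf.isSymmSndFDerivAt (by
    rw [minSmoothness_of_isRCLikeNormedField]; exact WithTop.coe_le_coe.2 (le_top : (2 : ℕ∞) ≤ ⊤))
  have h : DifferentiableAt ℝ (fderiv ℝ f) z := (hf.fderiv_right (m := ∞) (by simp)).differentiableAt (by simp)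
  have key : ∀ v w : Fin n → ℂ, fderiv ℝ (fun y => fderiv ℝ f y v) z w = fderiv ℝ (fderiv ℝ f) z w v := by
    intro v w
    rw [fderiv_clm_apply h (differentiableAt_const _)]
    simp
  have hd : ∀ v, DifferentiableAt ℝ (fun y => fderiv ℝ f y v) z := fun v =>
    h.clm_apply (differentiableAt_const _)
  have e1 : ∀ w, fderiv ℝ (dzbar f k) z w = (1/2 : ℂ) * (fderiv ℝ (fderiv ℝ f) z w (Pi.single k 1)
      + Complex.I * fderiv ℝ (fderiv ℝ f) z w (Pi.single k Complex.I)) := by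
    intro w
    unfold dzbar
    rw [fderiv_const_mul ((hd _).fun_add ((hd _).const_mul _)), fderiv_fun_add (hd _) ((hd _).const_mul _),
      fderiv_const_mul (hd _)]
    simp [key]
    ring
  have e2 : ∀ w, fderiv ℝ (dz f l) z w = (1/2 : ℂ) * (fderiv ℝ (fderiv ℝ f) z w (Pi.single l 1)
      - Complex.I * fderiv ℝ (fderiv ℝ f) z w (Pi.single l Complex.I)) := by
    intro w
    unfold dz
    rw [fderiv_const_mul ((hd _).fun_sub ((hd _).const_mul _)), fderiv_fun_sub (hd _) ((hd _).const_mul _),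
      fderiv_const_mul (hd _)]
    simp [key]
  rw [dz, dzbar, e1, e1, e2, e2]
  rw [hs (Pi.single l 1) (Pi.single k 1), hs (Pi.single l 1) (Pi.single k Complex.I),
    hs (Pi.single l Complex.I) (Pi.single k 1), hs (Pi.single l Complex.I) (Pi.single k Complex.I)]
  ring

lemma int_fderiv {n : ℕ} {G : (Fin n → ℂ) → ℂ} (hG : ContDiff ℝ ∞ G) (hc : HasCompactSupport G)
    (v : Fin n → ℂ) : Integrable (fun z => fderiv ℝ G z v) ∧ ∫ z, fderiv ℝ G z v = 0 := by
  have hi : Integrable (fun z => fderiv ℝ G z v) := by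
    apply Continuous.integrable_of_hasCompactSupport
    · exact (hG.continuous_fderiv (by simp)).clm_apply continuous_const
    · exact hc.fderiv_apply (𝕜 := ℝ) v
  refine ⟨hi, ?_⟩
  have := integral_mul_fderiv_eq_neg_fderiv_mul_of_integrable (μ := (volume : Measure (Fin n → ℂ)))
    (f := fun _ => (1 : ℂ)) (g := G) (v := v) (by simp) (by simpa using hi)
    (by simpa using hG.continuous.integrable_of_hasCompactSupport hc) (by simp)
    (fun x _ => da hG.contDiffAt)
  simpa using this

lemma int_dz {n : ℕ} {G : (Fin n → ℂ) → ℂ} (hG : ContDiff ℝ ∞ G) (hc : HasCompactSupport G)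
    (k : Fin n) : Integrable (dz G k) ∧ ∫ z, dz G k z = 0 := by
  have h1 := int_fderiv hG hc (Pi.single k 1)
  have h2 := int_fderiv hG hc (Pi.single k Complex.I)
  unfold dz
  refine ⟨(h1.1.sub (h2.1.const_mul _)).const_mul _, ?_⟩
  rw [integral_const_mul, integral_sub h1.1 (h2.1.const_mul _), integral_const_mul, h1.2, h2.2]
  simp

lemma int_dzbar {n : ℕ} {G : (Fin n → ℂ) → ℂ} (hG : ContDiff ℝ ∞ G) (hc : HasCompactSupport G)
    (k : Fin n) : Integrable (dzbar G k) ∧ ∫ z, dzbar G k z = 0 := by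
  have h1 := int_fderiv hG hc (Pi.single k 1)
  have h2 := int_fderiv hG hc (Pi.single k Complex.I)
  unfold dzbar
  refine ⟨(h1.1.add (h2.1.const_mul _)).const_mul _, ?_⟩
  rw [integral_const_mul, integral_add h1.1 (h2.1.const_mul _), integral_const_mul, h1.2, h2.2]
  simp

/-- product of a function smooth on Ω with a function compactly supported in Ω -/
lemma cd_prod {n : ℕ} {Ω : Set (Fin n → ℂ)} {f g : (Fin n → ℂ) → ℂ}
    (hf : ∀ z ∈ Ω, ContDiffAt ℝ ∞ f z) (hg : ∀ z ∈ Ω, ContDiffAt ℝ ∞ g z) (hgc : HasCompactSupport g)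
    (hs : tsupport g ⊆ Ω) :
    ContDiff ℝ ∞ (fun z => f z * g z) ∧ HasCompactSupport (fun z => f z * g z) := by
  refine ⟨?_, hgc.mul_left⟩
  rw [contDiff_iff_contDiffAt]
  intro z
  by_cases hz : z ∈ tsupport (fun z => f z * g z)
  swap
  · rw [notMem_tsupport_iff_eventuallyEq] at hz
    exact contDiffAt_const.congr_of_eventuallyEq hz
  have : z ∈ Ω := hs (tsupport_mul_subset_right hz)
  exact (hf z this).mul (hg z this)

lemma integrableOn_of {n : ℕ} {Ω K : Set (Fin n → ℂ)} {F : (Fin n → ℂ) → ℝ}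
    (hΩ : IsOpen Ω) (hK : IsCompact K) (hKΩ : K ⊆ Ω) (hF : ∀ z ∈ Ω, ContinuousAt F z)
    (h0 : ∀ z, z ∉ K → F z = 0) : IntegrableOn F Ω := by
  have h1 : IntegrableOn F K := ContinuousOn.integrableOn_compact hK
    (fun z hz => (hF z (hKΩ hz)).continuousWithinAt)
  exact h1.of_forall_sdiff_eq_zero hΩ.measurableSet (fun z hz => h0 z hz.2)

lemma tsupport_dz {n : ℕ} (f : (Fin n → ℂ) → ℂ) (k : Fin n) (z : Fin n → ℂ) (hz : z ∉ tsupport f) :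
    dz f k z = 0 ∧ dzbar f k z = 0 := by
  have : fderiv ℝ f z = 0 := by
    have := tsupport_fderiv_subset ℝ (f := f)
    exact image_eq_zero_of_notMem_tsupport (fun h => hz (this h))
  simp [dz, dzbar, this]

end HM

namespace HM

open scoped ContDiff

/-- divergence term -/
noncomputable def Dv {n : ℕ} (h : (Fin n → ℂ) → ℂ) (v : Fin n → (Fin n → ℂ) → ℂ) (k l : Fin n)
    (z : Fin n → ℂ) : ℂ :=
  dz (fun w => h w * (dzbar (v l) k w * star (v k w))) l z
    - dzbar (fun w => h w * (dz (v l) l w * star (v k w))) k z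
    - dzbar (fun w => dz h l w * (v l w * star (v k w))) k z

lemma Dv_eq {n : ℕ} {h : (Fin n → ℂ) → ℂ} {v : Fin n → (Fin n → ℂ) → ℂ} {z : Fin n → ℂ}
    (hh : ContDiffAt ℝ ∞ h z) (hv : ∀ k, ContDiffAt ℝ ∞ (v k) z) (k l : Fin n) :
    Dv h v k l z = h z * (dzbar (v l) k z * star (dzbar (v k) l z))
      - dzbar h k z * (dz (v l) l z * star (v k z))
      - h z * (dz (v l) l z * star (dz (v k) k z))
      - dz (dzbar h k) l z * v l z * star (v k z)
      - dz h l z * v l z * star (dz (v k) k z) := by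
  unfold Dv
  have s1 := cd_star (hv k)
  rw [dz_mul hh ((cd_dzbar (hv l) k).mul s1), dz_mul (cd_dzbar (hv l) k) s1,
    dzbar_mul hh ((cd_dz (hv l) l).mul s1), dzbar_mul (cd_dz (hv l) l) s1,
    dzbar_mul (cd_dz hh l) ((hv l).mul s1), dzbar_mul (hv l) s1,
    dz_star (hv k), dzbar_star (hv k), dz_dzbar_comm (hv l), dz_dzbar_comm hh]
  ring

lemma Dv_int {n : ℕ} {Ω : Set (Fin n → ℂ)} {h : (Fin n → ℂ) → ℂ} {v : Fin n → (Fin n → ℂ) → ℂ}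
    (hh : ∀ z ∈ Ω, ContDiffAt ℝ ∞ h z) (hv : ∀ k, ContDiff ℝ ∞ (v k))
    (hc : ∀ k, HasCompactSupport (v k)) (hs : ∀ k, tsupport (v k) ⊆ Ω) (k l : Fin n) :
    IntegrableOn (Dv h v k l) Ω ∧ ∫ z in Ω, Dv h v k l z = 0 := by
  have hcs : HasCompactSupport (fun w => star (v k w)) := by
    have := (hc k).comp_left (g := (star : ℂ → ℂ)) (star_zero _)
    exact this
  have hts : tsupport (fun w => star (v k w)) ⊆ Ω :=
    (closure_mono (Function.support_comp_subset (g := (star : ℂ → ℂ)) (star_zero _) (v k))).trans (hs k)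
  have key : ∀ f g : (Fin n → ℂ) → ℂ, (∀ z ∈ Ω, ContDiffAt ℝ ∞ f z) → (∀ z ∈ Ω, ContDiffAt ℝ ∞ g z) →
      (ContDiff ℝ ∞ (fun z => f z * (g z * star (v k z))) ∧
        HasCompactSupport (fun z => f z * (g z * star (v k z)))) ∧
        ∀ z, z ∉ Ω → z ∉ tsupport (fun z => f z * (g z * star (v k z))) := by
    intro f g hf hg
    have hg1 := cd_prod hg (fun z _ => cd_star (hv k).contDiffAt) hcs hts
    have ht : tsupport (fun z => g z * star (v k z)) ⊆ Ω :=
      (tsupport_mul_subset_right).trans hts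
    refine ⟨cd_prod hf (fun z _ => hg1.1.contDiffAt) hg1.2 ht, ?_⟩
    intro z hz hz'
    exact hz (ht (tsupport_mul_subset_right hz'))
  have k1 := key h (dzbar (v l) k) hh (fun z _ => cd_dzbar (hv l).contDiffAt k)
  have k2 := key h (dz (v l) l) hh (fun z _ => cd_dz (hv l).contDiffAt l)
  have k3 := key (dz h l) (v l) (fun z hz => cd_dz (hh z hz) l) (fun z _ => (hv l).contDiffAt)
  have i1 := int_dz k1.1.1 k1.1.2 l
  have i2 := int_dzbar k2.1.1 k2.1.2 k
  have i3 := int_dzbar k3.1.1 k3.1.2 k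
  have hI : Integrable (Dv h v k l) := (i1.1.sub i2.1).sub i3.1
  refine ⟨hI.integrableOn, ?_⟩
  rw [setIntegral_eq_integral_of_forall_compl_eq_zero]
  · unfold Dv
    have e := integral_sub (i1.1.sub i2.1) i3.1
    simp only [Pi.sub_apply] at e
    rw [e, integral_sub i1.1 i2.1, i1.2, i2.2, i3.2]
    simp
  · intro z hz
    unfold Dv
    rw [(tsupport_dz _ l z (k1.2 z hz)).1, (tsupport_dz _ k z (k2.2 z hz)).2,
      (tsupport_dz _ k z (k3.2 z hz)).2]
    simp

lemma Dv_sum {n : ℕ} {h : (Fin n → ℂ) → ℂ} {v : Fin n → (Fin n → ℂ) → ℂ} {z : Fin n → ℂ}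
    (hh : ContDiffAt ℝ ∞ h z) (hv : ∀ k, ContDiffAt ℝ ∞ (v k) z)
    (hreal : ∀ k, dzbar h k z = star (dz h k z)) :
    ∑ k, ∑ l, Dv h v k l z = h z * (∑ k, ∑ l, dzbar (v l) k z * star (dzbar (v k) l z))
      - (∑ l, dz (v l) l z) * star (∑ l, dz h l z * v l z)
      - h z * ((∑ l, dz (v l) l z) * star (∑ l, dz (v l) l z))
      - (∑ k, ∑ l, dz (dzbar h k) l z * v l z * star (v k z))
      - (∑ l, dz h l z * v l z) * star (∑ l, dz (v l) l z) := by
  simp only [Dv_eq hh hv, hreal, Finset.sum_sub_distrib]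
  congr 1
  · congr 1
    · congr 1
      · congr 1
        · simp only [Finset.mul_sum]
        · rw [star_sum, Finset.sum_mul_sum, Finset.sum_comm]
          refine Finset.sum_congr rfl fun k _ => Finset.sum_congr rfl fun l _ => ?_
          rw [star_mul']; ring
      · rw [star_sum, Finset.sum_mul_sum, Finset.mul_sum, Finset.sum_comm]
        refine Finset.sum_congr rfl fun k _ => ?_
        rw [Finset.mul_sum]
  · rw [star_sum, Finset.sum_mul_sum, Finset.sum_comm]

end HM

namespace HM

open scoped ContDiff

lemma cd_ofReal {n : ℕ} {f : (Fin n → ℂ) → ℝ} {z : Fin n → ℂ} (hf : ContDiffAt ℝ ∞ f z) :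
    ContDiffAt ℝ ∞ (fun w => (f w : ℂ)) z :=
  (Complex.ofRealCLM.contDiff.contDiffAt).comp z hf

lemma fderiv_ofReal {n : ℕ} {f : (Fin n → ℂ) → ℝ} {z : Fin n → ℂ} (hf : DifferentiableAt ℝ f z)
    (v : Fin n → ℂ) : fderiv ℝ (fun w => (f w : ℂ)) z v = ((fderiv ℝ f z v : ℝ) : ℂ) := by
  have := (Complex.ofRealCLM.hasFDerivAt (x := f z)).comp z hf.hasFDerivAt
  have h2 := this.fderiv
  have h3 : (fun w => (f w : ℂ)) = Complex.ofRealCLM ∘ f := by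
    funext w; simp
  rw [h3, h2]
  simp

lemma dzbar_ofReal {n : ℕ} {f : (Fin n → ℂ) → ℝ} {z : Fin n → ℂ} (hf : DifferentiableAt ℝ f z)
    (k : Fin n) : dzbar (fun w => (f w : ℂ)) k z = star (dz (fun w => (f w : ℂ)) k z) := by
  unfold dz dzbar
  rw [fderiv_ofReal hf, fderiv_ofReal hf]
  simp

lemma fderiv_pow' {n : ℕ} {r : (Fin n → ℂ) → ℝ} {z : Fin n → ℂ} (hf : ContDiffAt ℝ ∞ r z)
    (hz : r z < 0) (t : ℝ) :
    HasFDerivAt (fun w => (-(r w)) ^ t) ((-(t * (-(r z)) ^ (t - 1))) • fderiv ℝ r z) z := by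
  have h := ((da hf).hasFDerivAt.neg).rpow_const (p := t) (Or.inl (by simpa using hz.ne))
  have h2 := h.congr_fderiv (g' := (-(t * (-(r z)) ^ (t - 1))) • fderiv ℝ r z) (by ext v; simp)
  exact h2

lemma cd_pow {n : ℕ} {r : (Fin n → ℂ) → ℝ} {z : Fin n → ℂ} (hf : ContDiffAt ℝ ∞ r z)
    (hz : r z < 0) (t : ℝ) : ContDiffAt ℝ ∞ (fun w => (-(r w)) ^ t) z :=
  hf.neg.rpow_const_of_ne (by simpa using hz.ne)

lemma dz_pow {n : ℕ} {r : (Fin n → ℂ) → ℝ} {z : Fin n → ℂ} (hf : ContDiffAt ℝ ∞ r z)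
    (hz : r z < 0) (t : ℝ) (k : Fin n) :
    dz (fun w => (((-(r w)) ^ t : ℝ) : ℂ)) k z
      = ((-(t * (-(r z)) ^ (t - 1)) : ℝ) : ℂ) * dz (fun w => (r w : ℂ)) k z := by
  have h := fderiv_pow' hf hz t
  unfold dz
  rw [fderiv_ofReal h.differentiableAt, fderiv_ofReal h.differentiableAt,
    fderiv_ofReal (da hf), fderiv_ofReal (da hf), h.fderiv]
  simp
  ring

lemma dz_cmul {n : ℕ} {f : (Fin n → ℂ) → ℂ} {z : Fin n → ℂ} (hf : ContDiffAt ℝ ∞ f z) (c : ℂ)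
    (k : Fin n) : dz (fun w => c * f w) k z = c * dz f k z := by
  rw [dz_mul contDiffAt_const hf]
  simp [dz]

lemma dzbar_cmul {n : ℕ} {f : (Fin n → ℂ) → ℂ} {z : Fin n → ℂ} (hf : ContDiffAt ℝ ∞ f z) (c : ℂ)
    (k : Fin n) : dzbar (fun w => c * f w) k z = c * dzbar f k z := by
  rw [dzbar_mul contDiffAt_const hf]
  simp [dzbar]

lemma cd_F {n : ℕ} {r : (Fin n → ℂ) → ℝ} {z : Fin n → ℂ} (hf : ContDiffAt ℝ ∞ r z)
    (hz : r z < 0) (s : ℝ) : ContDiffAt ℝ ∞ (fun w => ((-((-(r w)) ^ s) : ℝ) : ℂ)) z :=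
  cd_ofReal (cd_pow hf hz s).neg

lemma dz_F {n : ℕ} {r : (Fin n → ℂ) → ℝ} {z : Fin n → ℂ} (hf : ContDiffAt ℝ ∞ r z)
    (hz : r z < 0) (s : ℝ) (k : Fin n) :
    dz (fun w => ((-((-(r w)) ^ s) : ℝ) : ℂ)) k z
      = ((s * (-(r z)) ^ (s - 1) : ℝ) : ℂ) * dz (fun w => (r w : ℂ)) k z := by
  have e : (fun w => ((-((-(r w)) ^ s) : ℝ) : ℂ)) = fun w => (-1 : ℂ) * (((-(r w)) ^ s : ℝ) : ℂ) := by
    funext w; push_cast; ring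
  rw [e, dz_cmul (cd_ofReal (cd_pow hf hz s)), dz_pow hf hz]
  push_cast; ring

lemma dzbar_F {n : ℕ} {r : (Fin n → ℂ) → ℝ} {z : Fin n → ℂ} (hf : ContDiffAt ℝ ∞ r z)
    (hz : r z < 0) (s : ℝ) (k : Fin n) :
    dzbar (fun w => ((-((-(r w)) ^ s) : ℝ) : ℂ)) k z
      = ((s * (-(r z)) ^ (s - 1) : ℝ) : ℂ) * dzbar (fun w => (r w : ℂ)) k z := by
  rw [dzbar_ofReal (da (cd_pow hf hz s).neg), dz_F hf hz, dzbar_ofReal (da hf), star_mul']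
  congr 1
  rw [Complex.star_def, Complex.conj_ofReal]

lemma hess_F {n : ℕ} {Ω : Set (Fin n → ℂ)} (hΩ : IsOpen Ω) {r : (Fin n → ℂ) → ℝ}
    (hf : ∀ z ∈ Ω, ContDiffAt ℝ ∞ r z) (hr : ∀ z ∈ Ω, r z < 0) (s : ℝ) (l k : Fin n)
    {z : Fin n → ℂ} (hz : z ∈ Ω) :
    hessW (fun w => -((-(r w)) ^ s)) l k z
      = ((s * (-(r z)) ^ (s - 1) : ℝ) : ℂ) * hessW r l k z
        + ((s * (1 - s) * (-(r z)) ^ (s - 2) : ℝ) : ℂ) *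
          (dz (fun w => (r w : ℂ)) l z * star (dz (fun w => (r w : ℂ)) k z)) := by
  unfold hessW
  have e : (fun w => dzbar (fun y => ((-((-(r y)) ^ s) : ℝ) : ℂ)) k w)
      =ᶠ[nhds z] fun w => (s : ℂ) * ((((-(r w)) ^ (s - 1) : ℝ) : ℂ) * dzbar (fun w => (r w : ℂ)) k w) := by
    filter_upwards [hΩ.mem_nhds hz] with w hw
    rw [dzbar_F (hf w hw) (hr w hw)]
    push_cast; ring
  have e2 : dz (fun w => dzbar (fun y => ((-((-(r y)) ^ s) : ℝ) : ℂ)) k w) l z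
      = dz (fun w => (s : ℂ) * ((((-(r w)) ^ (s - 1) : ℝ) : ℂ) * dzbar (fun w => (r w : ℂ)) k w)) l z := by
    unfold dz
    rw [e.fderiv_eq]
  have c1 := cd_ofReal (cd_pow (hf z hz) (hr z hz) (s - 1))
  have c2 := cd_dzbar (cd_ofReal (hf z hz)) k
  rw [e2, dz_cmul (c1.mul c2), dz_mul c1 c2, dz_pow (hf z hz) (hr z hz), dzbar_ofReal (da (hf z hz))]
  rw [show s - 1 - 1 = s - 2 by ring]
  push_cast
  ring

end HM

namespace HM

open scoped ContDiff

lemma mForm_bound {n p : ℕ} (H : Matrix (Fin n) (Fin n) ℂ) (u v : (Fin (p + 1) → Fin n) → ℂ)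
    {B a b : ℝ} (hB : ∀ l k, ‖H l k‖ ≤ B) (ha : ∀ I, ‖u I‖ ≤ a) (hb : ∀ I, ‖v I‖ ≤ b)
    (hB0 : 0 ≤ B) (ha0 : 0 ≤ a) :
    ‖mForm (p + 1) H u v‖ ≤ ((Incr n p).card * (n * n)) * B * (a * b) := by
  unfold mForm
  have h1 : ∀ J k l, ‖H l k * u (cons' (p + 1) l J) * star (v (cons' (p + 1) k J))‖ ≤ B * a * b := by
    intro J k l
    rw [norm_mul, norm_mul, norm_star]
    have := mul_le_mul (hB l k) (ha (cons' (p + 1) l J)) (norm_nonneg _) hB0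
    exact mul_le_mul this (hb _) (norm_nonneg _) (by positivity)
  refine (norm_sum_le_of_le _ (fun J _ => norm_sum_le_of_le _ (fun k _ => norm_sum_le_of_le _
    (fun l _ => h1 J k l)))).trans (le_of_eq ?_)
  simp
  ring

set_option maxHeartbeats 1600000 in
/-- The pointwise algebraic estimate. -/
lemma ptwise {n p : ℕ} {s c ε X B : ℝ} (hs0 : 0 < s) (hs1 : s < 1) (hc : 0 < c) (hε : 0 < ε)
    (hX0 : 0 ≤ X) (hB0 : 0 ≤ B) :
    ∃ κ > 0, ∀ (t : ℝ) (ξ : Fin n → ℂ) (H : Matrix (Fin n) (Fin n) ℂ), 0 < t →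
      (∀ l, ‖ξ l‖ ≤ X) → (∀ l k, ‖H l k‖ ≤ B) → (ε ≤ ∑ l, ‖ξ l‖ ^ 2 ∨ ε ≤ t ^ 2) →
      (∀ u : (Fin (p + 1) → Fin n) → ℂ, IsCoeff u →
        c * t ^ s * nSq u ≤ s * t ^ (s - 1) * (mForm (p + 1) H u u).re
          + s * (1 - s) * t ^ (s - 2) * ∑ J ∈ Incr n p, ‖∑ l, ξ l * u (cons' (p + 1) l J)‖ ^ 2) →
      ∀ u : (Fin (p + 1) → Fin n) → ℂ, IsCoeff u →
        κ * (t ^ (s - 2) * ∑ J ∈ Incr n p, ‖∑ l, ξ l * u (cons' (p + 1) l J)‖ ^ 2)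
          ≤ s * t ^ (s - 1) * (mForm (p + 1) H u u).re
          + s * (1 - s) * t ^ (s - 2) * ∑ J ∈ Incr n p, ‖∑ l, ξ l * u (cons' (p + 1) l J)‖ ^ 2 := by
  set cd : ℝ := ((Incr n p).card : ℝ) with hcd
  have hcd0 : 0 ≤ cd := by positivity
  set E : ℝ := ((p : ℝ) + 1) * X / ε with hE
  have hE0 : 0 ≤ E := by positivity
  set C2 : ℝ := (cd + 1) * (n * X) with hC2
  have hC20 : 0 ≤ C2 := by positivity
  set Kc : ℝ := cd * (n * n) * B with hKc
  have hKc0 : 0 ≤ Kc := by positivity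
  set G : ℝ := Kc * (2 * E + E ^ 2 * C2) with hG
  have hG0 : 0 ≤ G := by positivity
  set m1 : ℝ := 1 + s * G ^ 2 / (2 * (1 - s) * c) with hm1
  have h1s : 0 < 1 - s := by linarith
  have hm10 : 0 < m1 := by positivity
  set κ1 : ℝ := (s * (1 - s) / 2) / m1 with hκ1
  set κ2 : ℝ := c * ε / (C2 ^ 2 + 1) with hκ2
  have hκ10 : 0 < κ1 := by positivity
  have hκ20 : 0 < κ2 := by positivity
  refine ⟨min κ1 κ2, lt_min hκ10 hκ20, ?_⟩
  intro t ξ H ht hX hB hor hyp u hu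
  set Y : ℝ := ∑ J ∈ Incr n p, ‖∑ l, ξ l * u (cons' (p + 1) l J)‖ ^ 2 with hY
  have hY0 : 0 ≤ Y := Finset.sum_nonneg fun _ _ => by positivity
  set W : ℝ := Real.sqrt Y with hW
  have hW0 : 0 ≤ W := Real.sqrt_nonneg _
  have hWY : W ^ 2 = Y := Real.sq_sqrt hY0
  have hN20 : 0 ≤ nSq u := Finset.sum_nonneg fun _ _ => by positivity
  set N : ℝ := Real.sqrt (nSq u) with hN
  have hN0 : 0 ≤ N := Real.sqrt_nonneg _
  have hNN : N ^ 2 = nSq u := Real.sq_sqrt hN20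
  have huN : ∀ I, ‖u I‖ ≤ N := coeff_norm_le hu
  have hwW : ∀ J : Fin p → Fin n, ‖∑ l, ξ l * u (cons' (p + 1) l J)‖ ≤ W :=
    coeff_norm_le (contr_coeff hu ξ)
  have hwN : ∀ J : Fin p → Fin n, ‖∑ l, ξ l * u (cons' (p + 1) l J)‖ ≤ n * X * N := by
    intro J
    have : ∀ l ∈ Finset.univ, ‖ξ l * u (cons' (p + 1) l J)‖ ≤ X * N := by
      intro l _
      rw [norm_mul]
      exact mul_le_mul (hX l) (huN _) (norm_nonneg _) hX0
    refine (norm_sum_le_of_le _ this).trans (le_of_eq ?_)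
    simp; ring
  have hWN : W ≤ C2 * N := by
    apply Real.sqrt_le_iff.2
    refine ⟨by positivity, ?_⟩
    have h1 : Y ≤ cd * (n * X * N) ^ 2 := by
      have : ∀ J ∈ Incr n p, ‖∑ l, ξ l * u (cons' (p + 1) l J)‖ ^ 2 ≤ (n * X * N) ^ 2 := by
        intro J _
        exact pow_le_pow_left₀ (norm_nonneg _) (hwN J) 2
      refine (Finset.sum_le_card_nsmul _ _ _ this).trans (le_of_eq ?_)
      simp [hcd]
    have h2 : cd ≤ (cd + 1) ^ 2 := by nlinarith
    calc Y ≤ cd * (n * X * N) ^ 2 := h1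
      _ ≤ (cd + 1) ^ 2 * (n * X * N) ^ 2 := by gcongr
      _ = _ := by rw [hC2]; ring
  set Q := s * t ^ (s - 1) * (mForm (p + 1) H u u).re + s * (1 - s) * t ^ (s - 2) * Y with hQ
  have hQ1 : c * t ^ s * N ^ 2 ≤ Q := by rw [hNN]; exact hyp u hu
  have hts : 0 < t ^ s := Real.rpow_pos_of_pos ht _
  have hts1 : 0 < t ^ (s - 1) := Real.rpow_pos_of_pos ht _
  have hts2 : 0 < t ^ (s - 2) := Real.rpow_pos_of_pos ht _
  have e1 : t ^ (s - 1) = t ^ (s - 2) * t := by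
    rw [← Real.rpow_add_one ht.ne']; congr 1; ring
  have e2 : t ^ s = t ^ (s - 2) * t ^ 2 := by
    rw [← Real.rpow_natCast t 2, ← Real.rpow_add ht]; congr 1; norm_num
  have hQ0 : 0 ≤ Q := le_trans (by positivity) hQ1
  rcases hor with hξ | ht2
  · obtain ⟨e, he, hec, heb⟩ := tang hu ξ ε X W hε hξ hX hwW hX0 hW0
    set v : (Fin (p + 1) → Fin n) → ℂ := fun I => u I - e I with hv
    have hvc : IsCoeff v := by
      intro σ I
      simp only [hv]
      rw [hu, he]; ring
    have hv0 : ∀ J : Fin p → Fin n, ∑ l, ξ l * v (cons' (p + 1) l J) = 0 := by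
      intro J
      simp only [hv, mul_sub, Finset.sum_sub_distrib]
      exact sub_eq_zero.2 (hec J).symm
    have h1 := hyp v hvc
    simp only [hv0] at h1
    have hnv : 0 ≤ nSq v := Finset.sum_nonneg fun _ _ => by positivity
    have h2 : 0 ≤ (mForm (p + 1) H v v).re := by
      have h3 : 0 ≤ s * t ^ (s - 1) * (mForm (p + 1) H v v).re := by
        have : 0 ≤ c * t ^ s * nSq v := by positivity
        simp at h1
        linarith
      exact nonneg_of_mul_nonneg_right h3 (by positivity)
    have hvb : ∀ I, ‖v I‖ ≤ N + E * W := by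
      intro I
      refine (norm_sub_le _ _).trans ?_
      exact add_le_add (huN I) (heb I)
    have hdec : mForm (p + 1) H u u = mForm (p + 1) H v v + mForm (p + 1) H e v + mForm (p + 1) H u e := by
      simp only [mForm, ← Finset.sum_add_distrib]
      refine Finset.sum_congr rfl fun J _ => Finset.sum_congr rfl fun k _ =>
        Finset.sum_congr rfl fun l _ => ?_
      simp only [hv, star_sub]
      ring
    have b1 := mForm_bound H e v hB heb hvb hB0 (by positivity)
    have b2 := mForm_bound H u e hB huN heb hB0 hN0
    have b1' := (Complex.abs_re_le_norm (mForm (p + 1) H e v)).trans b1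
    have b2' := (Complex.abs_re_le_norm (mForm (p + 1) H u e)).trans b2
    have b3 := neg_le_of_abs_le b1'
    have b4 := neg_le_of_abs_le b2'
    have hre : -(G * (W * N)) ≤ (mForm (p + 1) H u u).re := by
      rw [hdec, Complex.add_re, Complex.add_re]
      have h5 : Kc * E ^ 2 * W * W ≤ Kc * E ^ 2 * W * (C2 * N) := by gcongr
      have h6 : Kc * ((E * W) * (N + E * W)) + Kc * (N * (E * W)) ≤ G * (W * N) := by
        rw [hG]; linarith
      linarith
    have h7 : s * (1 - s) / 2 * (t ^ (s - 2) * Y) ≤ m1 * Q := by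
      have h8 : -(s * t ^ (s - 1) * (G * (W * N))) + s * (1 - s) * t ^ (s - 2) * Y ≤ Q := by
        rw [hQ]
        have := mul_le_mul_of_nonneg_left hre (show 0 ≤ s * t ^ (s - 1) by positivity)
        linarith
      have h9 : t * (G * (W * N)) ≤ (1 - s) / 2 * W ^ 2 + G ^ 2 / (2 * (1 - s)) * (t ^ 2 * N ^ 2) := by
        have : 0 ≤ ((1 - s) * W - G * t * N) ^ 2 / (2 * (1 - s)) := by positivity
        have e3 : ((1 - s) * W - G * t * N) ^ 2 / (2 * (1 - s))
          = (1 - s) / 2 * W ^ 2 + G ^ 2 / (2 * (1 - s)) * (t ^ 2 * N ^ 2) - t * (G * (W * N)) := by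
          field_simp
          ring
        linarith
      have h10 : s * t ^ (s - 1) * (G * (W * N)) ≤ s * (1 - s) / 2 * (t ^ (s - 2) * Y)
          + s * G ^ 2 / (2 * (1 - s) * c) * (c * t ^ s * N ^ 2) := by
        have := mul_le_mul_of_nonneg_left h9 (show 0 ≤ s * t ^ (s - 2) by positivity)
        rw [e1, e2, ← hWY]
        refine le_trans (le_of_eq (by ring)) (this.trans (le_of_eq ?_))
        field_simp
      have h11 := mul_le_mul_of_nonneg_left hQ1 (show 0 ≤ s * G ^ 2 / (2 * (1 - s) * c) by positivity)
      rw [hm1, add_mul, one_mul]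
      linarith
    have h12 : κ1 * (t ^ (s - 2) * Y) ≤ Q := by
      rw [hκ1, div_mul_eq_mul_div, div_le_iff₀ hm10]
      linarith
    refine le_trans ?_ h12
    exact mul_le_mul_of_nonneg_right (min_le_left _ _) (by positivity)
  · have h12 : κ2 * (t ^ (s - 2) * Y) ≤ Q := by
      refine le_trans ?_ hQ1
      have h3 : Y ≤ (C2 ^ 2 + 1) * N ^ 2 := by
        rw [← hWY]
        have := pow_le_pow_left₀ hW0 hWN 2
        nlinarith
      rw [hκ2, e2, div_mul_eq_mul_div, div_le_iff₀ (by positivity)]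
      calc c * ε * (t ^ (s - 2) * Y) ≤ c * t ^ 2 * (t ^ (s - 2) * ((C2 ^ 2 + 1) * N ^ 2)) := by gcongr
        _ = _ := by ring
    refine le_trans ?_ h12
    exact mul_le_mul_of_nonneg_right (min_le_right _ _) (by positivity)

end HM

namespace HM

open scoped ContDiff

lemma hForm_F {n p : ℕ} {Ω : Set (Fin n → ℂ)} (hΩ : IsOpen Ω) {r : (Fin n → ℂ) → ℝ}
    (hf : ∀ z ∈ Ω, ContDiffAt ℝ ∞ r z) (hr : ∀ z ∈ Ω, r z < 0) (s : ℝ)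
    {z : Fin n → ℂ} (hz : z ∈ Ω) (u : (Fin (p + 1) → Fin n) → ℂ) :
    (hForm (p + 1) (fun w => -((-(r w)) ^ s)) u z).re
      = s * (-(r z)) ^ (s - 1) * (mForm (p + 1) (Matrix.of fun l k => hessW r l k z) u u).re
        + s * (1 - s) * (-(r z)) ^ (s - 2) * ∑ J ∈ Incr n p,
          ‖∑ l, dz (fun w => (r w : ℂ)) l z * u (cons' (p + 1) l J)‖ ^ 2 := by
  have h : hForm (p + 1) (fun w => -((-(r w)) ^ s)) u z
      = ((s * (-(r z)) ^ (s - 1) : ℝ) : ℂ) * mForm (p + 1) (Matrix.of fun l k => hessW r l k z) u u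
        + ((s * (1 - s) * (-(r z)) ^ (s - 2) : ℝ) : ℂ) * ((∑ J ∈ Incr n p,
          ‖∑ l, dz (fun w => (r w : ℂ)) l z * u (cons' (p + 1) l J)‖ ^ 2 : ℝ) : ℂ) := by
    unfold hForm mForm
    rw [Complex.ofReal_sum, Finset.mul_sum, Finset.mul_sum]
    erw [← Finset.sum_add_distrib]
    refine Finset.sum_congr rfl fun J _ => ?_
    rw [Complex.ofReal_pow, ← Complex.conj_mul', ← Complex.star_def, star_sum,
      Finset.sum_mul_sum, Finset.mul_sum, Finset.mul_sum,
      ← Finset.sum_add_distrib]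
    refine Finset.sum_congr rfl fun k _ => ?_
    rw [Finset.mul_sum, Finset.mul_sum, ← Finset.sum_add_distrib]
    refine Finset.sum_congr rfl fun l _ => ?_
    rw [hess_F hΩ hf hr s l k hz, star_mul']
    simp only [Matrix.of_apply]
    ring
  rw [h, Complex.add_re, Complex.re_ofReal_mul, Complex.re_ofReal_mul, Complex.ofReal_re]

lemma fderiv_zero_of_dz {n : ℕ} {r : (Fin n → ℂ) → ℝ} {z : Fin n → ℂ}
    (hf : DifferentiableAt ℝ r z) (h : ∀ l, dz (fun w => (r w : ℂ)) l z = 0) :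
    fderiv ℝ r z = 0 := by
  have h1 : ∀ l, fderiv ℝ r z (Pi.single l 1) = 0 ∧ fderiv ℝ r z (Pi.single l Complex.I) = 0 := by
    intro l
    have := h l
    unfold dz at this
    rw [fderiv_ofReal hf, fderiv_ofReal hf] at this
    have a := congrArg Complex.re this
    have b := congrArg Complex.im this
    simp at a b
    exact ⟨a, b⟩
  ext v
  have hv : v = ∑ l, ((v l).re • (Pi.single l (1 : ℂ) : Fin n → ℂ)
      + (v l).im • (Pi.single l Complex.I : Fin n → ℂ)) := by
    funext j
    rw [Finset.sum_apply, Finset.sum_eq_single j]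
    · simp
    · intro b _ hb
      simp [Pi.single_eq_of_ne hb.symm]
    · simp
  rw [hv, map_sum]
  simp [map_add, map_smul, h1]

lemma hess_lower {n p : ℕ} {Ω U : Set (Fin n → ℂ)} (hΩo : IsOpen Ω)
    (hΩb : Bornology.IsBounded Ω)
    (hU : IsOpen U) (hcl : closure Ω ⊆ U)
    {r : (Fin n → ℂ) → ℝ} (hf : ∀ z ∈ U, ContDiffAt ℝ ∞ r z)
    (hneg : ∀ z ∈ Ω, r z < 0)
    (hgrad : ∀ z ∈ U, r z = 0 → fderiv ℝ r z ≠ 0)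
    {s : ℝ} (hs0 : 0 < s) (hs1 : s < 1) {c : ℝ} (hc : 0 < c)
    (hhess : ∀ z ∈ Ω, ∀ u : (Fin (p + 1) → Fin n) → ℂ, IsCoeff u →
      c * (-(r z)) ^ s * nSq u ≤ (hForm (p + 1) (fun w => -((-(r w)) ^ s)) u z).re) :
    ∃ κ > 0, ∀ z ∈ Ω, ∀ u : (Fin (p + 1) → Fin n) → ℂ, IsCoeff u →
      κ * ((-(r z)) ^ (s - 2) * ∑ J ∈ Incr n p,
          ‖∑ l, dz (fun w => (r w : ℂ)) l z * u (cons' (p + 1) l J)‖ ^ 2)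
        ≤ (hForm (p + 1) (fun w => -((-(r w)) ^ s)) u z).re := by
  have hsub : Ω ⊆ U := subset_closure.trans hcl
  have hK : IsCompact (closure Ω) := hΩb.isCompact_closure
  have hfΩ : ∀ z ∈ Ω, ContDiffAt ℝ ∞ r z := fun z hz => hf z (hsub hz)
  -- bounds
  have hcR : ∀ l, ContinuousOn (dz (fun w => (r w : ℂ)) l) (closure Ω) := fun l z hz =>
    (cd_dz (cd_ofReal (hf z (hcl hz))) l).continuousAt.continuousWithinAt
  have hcH : ∀ l k, ContinuousOn (hessW r l k) (closure Ω) := fun l k z hz =>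
    (cd_dz (cd_dzbar (cd_ofReal (hf z (hcl hz))) k) l).continuousAt.continuousWithinAt
  choose X0 hX0 using fun l => hK.exists_bound_of_continuousOn (hcR l)
  choose B0 hB0 using fun l k => hK.exists_bound_of_continuousOn (hcH l k)
  set X : ℝ := ∑ l, |X0 l| with hX
  set B : ℝ := ∑ l, ∑ k, |B0 l k| with hB
  have hXl : ∀ l, |X0 l| ≤ X := fun l =>
    Finset.single_le_sum (f := fun l => |X0 l|) (fun _ _ => abs_nonneg _) (Finset.mem_univ l)
  have hBl : ∀ l k, |B0 l k| ≤ B := fun l k =>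
    (Finset.single_le_sum (f := fun k => |B0 l k|) (fun _ _ => abs_nonneg _)
      (Finset.mem_univ k)).trans
    (Finset.single_le_sum (f := fun l => ∑ k, |B0 l k|)
      (fun _ _ => Finset.sum_nonneg fun _ _ => abs_nonneg _) (Finset.mem_univ l))
  have hX00 : 0 ≤ X := Finset.sum_nonneg fun _ _ => abs_nonneg _
  have hB00 : 0 ≤ B := Finset.sum_nonneg fun _ _ => Finset.sum_nonneg fun _ _ => abs_nonneg _
  -- lower bound
  set g : (Fin n → ℂ) → ℝ := fun z => ∑ l, ‖dz (fun w => (r w : ℂ)) l z‖ ^ 2 + r z ^ 2 with hg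
  have hgc : ContinuousOn g (closure Ω) := by
    refine ContinuousOn.add (continuousOn_finsetSum _ fun l _ => ((hcR l).norm.pow 2)) ?_
    exact ContinuousOn.pow (fun z hz => (hf z (hcl hz)).continuousAt.continuousWithinAt) 2
  have hg0 : ∀ z, 0 ≤ ∑ l, ‖dz (fun w => (r w : ℂ)) l z‖ ^ 2 :=
    fun z => Finset.sum_nonneg fun _ _ => by positivity
  have hgpos : ∀ z ∈ closure Ω, g z ≠ 0 := by
    intro z hz h0
    have h1 : ∑ l, ‖dz (fun w => (r w : ℂ)) l z‖ ^ 2 = 0 := by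
      have := hg0 z; simp only [hg] at h0; nlinarith [sq_nonneg (r z)]
    have h2 : r z = 0 := by
      have := hg0 z; simp only [hg] at h0
      have : r z ^ 2 = 0 := by nlinarith [sq_nonneg (r z)]
      simpa using this
    apply hgrad z (hcl hz) h2
    apply fderiv_zero_of_dz (da (hf z (hcl hz)))
    intro l
    have := (Finset.sum_eq_zero_iff_of_nonneg (fun _ _ => by positivity)).1 h1 l (Finset.mem_univ l)
    simpa using this
  obtain ⟨M, hM⟩ := hK.exists_bound_of_continuousOn (hgc.inv₀ hgpos)
  set ε : ℝ := 1 / (2 * (|M| + 1)) with hε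
  have hε0 : 0 < ε := by positivity
  have hlow : ∀ z ∈ closure Ω, ε ≤ ∑ l, ‖dz (fun w => (r w : ℂ)) l z‖ ^ 2 ∨ ε ≤ (-(r z)) ^ 2 := by
    intro z hz
    by_contra hcon
    push Not at hcon
    have hgz : g z < 2 * ε := by
      simp only [hg]; nlinarith [hcon.1, hcon.2]
    have hgp : 0 < g z := lt_of_le_of_ne
      (add_nonneg (hg0 z) (sq_nonneg _)) (Ne.symm (hgpos z hz))
    have h3 := hM z hz
    rw [Pi.inv_apply, Real.norm_eq_abs, abs_of_pos (inv_pos.2 hgp)] at h3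
    have h4 : (g z)⁻¹ < |M| + 1 := by have := le_abs_self M; linarith
    have h5 : 2 * ε = (|M| + 1)⁻¹ := by rw [hε]; field_simp
    rw [h5] at hgz
    have h6 := (inv_lt_inv₀ (by positivity) hgp).2 hgz
    rw [inv_inv] at h6
    linarith
  obtain ⟨κ, hκ, hmain⟩ := ptwise (n := n) (p := p) hs0 hs1 hc hε0 hX00 hB00
  refine ⟨κ, hκ, fun z hz u hu => ?_⟩
  have hzc := subset_closure hz
  have := hmain (-(r z)) (fun l => dz (fun w => (r w : ℂ)) l z) (Matrix.of fun l k => hessW r l k z)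
    (by linarith [hneg z hz])
    (fun l => (hX0 l z hzc).trans ((le_abs_self _).trans (hXl l)))
    (fun l k => (hB0 l k z hzc).trans ((le_abs_self _).trans (hBl l k)))
    (hlow z hzc)
    (fun v hv => by
      have := hhess z hz v hv
      rwa [hForm_F hΩo hfΩ hneg s hz] at this) u hu
  rwa [hForm_F hΩo hfΩ hneg s hz]

end HM

namespace HM

open scoped ContDiff

lemma star_ofReal' (x : ℝ) : star (x : ℂ) = (x : ℂ) := by
  rw [Complex.star_def, Complex.conj_ofReal]

lemma young_term {t s κ : ℝ} (ht : 0 < t) (hs0 : 0 < s) (hκ : 0 < κ) (w T : ℂ) :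
    -2 * ((((s * t ^ (s - 1) : ℝ) : ℂ) * w) * star T).re
      ≤ κ / 2 * (t ^ (s - 2) * ‖w‖ ^ 2) + 2 * s ^ 2 / κ * (t ^ s * ‖T‖ ^ 2) := by
  have h1 : -((((s * t ^ (s - 1) : ℝ) : ℂ) * w) * star T).re ≤ s * t ^ (s - 1) * (‖w‖ * ‖T‖) := by
    refine (neg_le_abs _).trans ((Complex.abs_re_le_norm _).trans (le_of_eq ?_))
    have : 0 < t ^ (s - 1) := Real.rpow_pos_of_pos ht _
    rw [norm_mul, norm_mul, norm_star, Complex.norm_real, Real.norm_eq_abs, abs_of_pos (by positivity)]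
    ring
  have e1 : t ^ (s - 1) = t ^ (s - 2) * t := by
    rw [← Real.rpow_add_one ht.ne']; congr 1; ring
  have e2 : t ^ s = t ^ (s - 2) * t ^ 2 := by
    rw [← Real.rpow_natCast t 2, ← Real.rpow_add ht]; congr 1; norm_num
  have h2 : 0 < t ^ (s - 2) := Real.rpow_pos_of_pos ht _
  have h3 : 0 ≤ t ^ (s - 2) * (κ * ‖w‖ - 2 * s * t * ‖T‖) ^ 2 / (2 * κ) := by positivity
  have h4 : t ^ (s - 2) * (κ * ‖w‖ - 2 * s * t * ‖T‖) ^ 2 / (2 * κ)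
      = κ / 2 * (t ^ (s - 2) * ‖w‖ ^ 2) + 2 * s ^ 2 / κ * (t ^ (s - 2) * t ^ 2 * ‖T‖ ^ 2)
        - 2 * (s * (t ^ (s - 2) * t) * (‖w‖ * ‖T‖)) := by
    field_simp
    ring
  rw [e2]
  rw [e1] at h1
  rw [e1]
  linarith

lemma coeff_dzbar {n q : ℕ} {u : (Fin q → Fin n) → (Fin n → ℂ) → ℂ}
    (hu : ∀ z, IsCoeff (fun I => u I z)) (hcd : ∀ I, ContDiff ℝ ∞ (u I)) (k : Fin n)
    (z : Fin n → ℂ) : IsCoeff (fun I => dzbar (u I) k z) := by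
  intro σ I
  have : u (I ∘ σ) = fun w => ((Equiv.Perm.sign σ : ℤ) : ℂ) * u I w := by
    funext w; exact hu w σ I
  simp only
  rw [this, dzbar_cmul (hcd I).contDiffAt]

lemma ptwise_final {n p : ℕ} {Ω : Set (Fin n → ℂ)} {r : (Fin n → ℂ) → ℝ}
    (hf : ∀ z ∈ Ω, ContDiffAt ℝ ∞ r z) (hneg : ∀ z ∈ Ω, r z < 0)
    {s κ : ℝ} (hs0 : 0 < s) (hκ : 0 < κ) {u : (Fin (p + 1) → Fin n) → (Fin n → ℂ) → ℂ}
    (hu : ∀ z, IsCoeff (fun I => u I z)) (hcd : ∀ I, ContDiff ℝ ∞ (u I))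
    {z : Fin n → ℂ} (hz : z ∈ Ω)
    (hlow : κ * ((-(r z)) ^ (s - 2) * ∑ J ∈ Incr n p,
          ‖∑ l, dz (fun w => (r w : ℂ)) l z * u (cons' (p + 1) l J) z‖ ^ 2)
        ≤ (hForm (p + 1) (fun w => -((-(r w)) ^ s)) (fun I => u I z) z).re) :
    κ / 2 * ((-(r z)) ^ (s - 2) * ∑ J ∈ Incr n p,
          ‖∑ l, dz (fun w => (r w : ℂ)) l z * u (cons' (p + 1) l J) z‖ ^ 2)
      ≤ (-(r z)) ^ s * dbarSq (p + 1) u z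
        + (1 + 2 * s ^ 2 / κ) * ((-(r z)) ^ s * thetaSq (p + 1) u z)
        - (∑ K ∈ Incr n p, ∑ k, ∑ l, Dv (fun w => ((-((-(r w)) ^ s) : ℝ) : ℂ))
            (fun j => u (cons' (p + 1) j K)) k l z).re := by
  set t : ℝ := -(r z) with ht
  have ht0 : 0 < t := by have := hneg z hz; linarith
  have hts : 0 < t ^ s := Real.rpow_pos_of_pos ht0 _
  set h : (Fin n → ℂ) → ℂ := fun w => ((-((-(r w)) ^ s) : ℝ) : ℂ) with hh
  have hhz : h z = ((-(t ^ s) : ℝ) : ℂ) := rfl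
  have hcdh : ContDiffAt ℝ ∞ h z := cd_F (hf z hz) (hneg z hz) s
  have hreal : ∀ k, dzbar h k z = star (dz h k z) := fun k =>
    dzbar_ofReal (da (cd_pow (hf z hz) (hneg z hz) s).neg) k
  -- per K
  have hK : ∀ K : Fin p → Fin n,
      (∑ k, ∑ l, dz (dzbar h k) l z * u (cons' (p + 1) l K) z * star (u (cons' (p + 1) k K) z)).re
      ≤ t ^ s * (-(∑ k, ∑ l, dzbar (u (cons' (p + 1) l K)) k z
            * star (dzbar (u (cons' (p + 1) k K)) l z)).re)
        + t ^ s * ‖thetaC (p + 1) u K z‖ ^ 2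
        + (κ / 2 * (t ^ (s - 2) * ‖∑ l, dz (fun w => (r w : ℂ)) l z * u (cons' (p + 1) l K) z‖ ^ 2)
          + 2 * s ^ 2 / κ * (t ^ s * ‖thetaC (p + 1) u K z‖ ^ 2))
        - (∑ k, ∑ l, Dv h (fun j => u (cons' (p + 1) j K)) k l z).re := by
    intro K
    have hD := Dv_sum hcdh (v := fun j => u (cons' (p + 1) j K)) (fun k => (hcd _).contDiffAt) hreal
    set T : ℂ := ∑ l, dz (u (cons' (p + 1) l K)) l z with hT
    set w : ℂ := ∑ l, dz (fun w => (r w : ℂ)) l z * u (cons' (p + 1) l K) z with hw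
    have hWh : ∑ l, dz h l z * u (cons' (p + 1) l K) z = ((s * t ^ (s - 1) : ℝ) : ℂ) * w := by
      rw [hw, Finset.mul_sum]
      refine Finset.sum_congr rfl fun l _ => ?_
      rw [hh, dz_F (hf z hz) (hneg z hz)]
      ring
    have hth : ‖thetaC (p + 1) u K z‖ = ‖T‖ := by
      unfold thetaC; rw [norm_neg]
    rw [hth]
    simp only [hWh, hhz] at hD
    have hY := young_term ht0 hs0 hκ w T
    have hD' := congrArg Complex.re hD
    simp only [Complex.sub_re, Complex.re_ofReal_mul] at hD'
    have c1 : (T * star (((s * t ^ (s - 1) : ℝ) : ℂ) * w)).re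
        = ((((s * t ^ (s - 1) : ℝ) : ℂ) * w) * star T).re := by
      rw [← Complex.conj_re, ← Complex.star_def, star_mul, star_star]
    have c2 : (T * star T).re = ‖T‖ ^ 2 := by
      rw [Complex.star_def, Complex.mul_conj', ← Complex.ofReal_pow, Complex.ofReal_re]
    rw [c1, c2] at hD'
    linarith
  have hsum := Finset.sum_le_sum (s := Incr n p) fun K _ => hK K
  rw [← Complex.re_sum] at hsum
  have hF : (hForm (p + 1) (fun w => -((-(r w)) ^ s)) (fun I => u I z) z)
      = ∑ K ∈ Incr n p, ∑ k, ∑ l, dz (dzbar h k) l z * u (cons' (p + 1) l K) z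
          * star (u (cons' (p + 1) k K) z) := rfl
  rw [← hF] at hsum
  have hdb := dbarSq_ge (n := n) (p := p) (fun J k => dzbar (u J) k z)
    (fun k => coeff_dzbar hu hcd k z)
  have hdb' : -(∑ K ∈ Incr n p, ∑ k, ∑ l, dzbar (u (cons' (p + 1) l K)) k z
            * star (dzbar (u (cons' (p + 1) k K)) l z)).re ≤ dbarSq (p + 1) u z := hdb
  have hdb2 := mul_le_mul_of_nonneg_left hdb' hts.le
  have hth : thetaSq (p + 1) u z = ∑ K ∈ Incr n p, ‖thetaC (p + 1) u K z‖ ^ 2 := rfl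
  simp only [Finset.sum_sub_distrib, Finset.sum_add_distrib, ← Finset.mul_sum,
    Finset.sum_neg_distrib, ← Complex.re_sum] at hsum
  rw [← hth] at hsum
  linarith

lemma dbarSq_nonneg {n q : ℕ} (u : (Fin q → Fin n) → (Fin n → ℂ) → ℂ) (z : Fin n → ℂ) :
    0 ≤ dbarSq q u z := by
  unfold dbarSq
  exact Finset.sum_nonneg fun _ _ => by positivity

lemma int_combine {n : ℕ} {Ω : Set (Fin n → ℂ)} (hΩ : MeasurableSet Ω)
    {f1 f2 f3 f5 : (Fin n → ℂ) → ℝ} (i1 : IntegrableOn f1 Ω) (i2 : IntegrableOn f2 Ω)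
    (i3 : IntegrableOn f3 Ω) (i5 : IntegrableOn f5 Ω) (a b : ℝ) (z5 : ∫ z in Ω, f5 z = 0)
    (h : ∀ z ∈ Ω, a * f1 z ≤ f2 z + b * f3 z - f5 z) :
    a * ∫ z in Ω, f1 z ≤ (∫ z in Ω, f2 z) + b * ∫ z in Ω, f3 z := by
  have j3 : IntegrableOn (fun z => b * f3 z) Ω := i3.const_mul b
  have j2 : IntegrableOn (fun z => f2 z + b * f3 z) Ω := i2.add j3
  have j1 : IntegrableOn (fun z => a * f1 z) Ω := i1.const_mul a
  have j : IntegrableOn (fun z => f2 z + b * f3 z - f5 z) Ω := j2.sub i5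
  have hm := setIntegral_mono_on j1 j hΩ h
  rw [integral_sub j2 i5, integral_add i2 j3, z5, integral_const_mul, integral_const_mul] at hm
  linarith

set_option maxHeartbeats 400000 in
theorem hardy_aux {n p : ℕ} {Ω U : Set (Fin n → ℂ)} (hΩo : IsOpen Ω)
    (hΩb : Bornology.IsBounded Ω)
    (hU : IsOpen U) (hcl : closure Ω ⊆ U)
    {r : (Fin n → ℂ) → ℝ} (hf : ∀ z ∈ U, ContDiffAt ℝ ∞ r z)
    (hneg : ∀ z ∈ Ω, r z < 0)
    (hgrad : ∀ z ∈ U, r z = 0 → fderiv ℝ r z ≠ 0)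
    {s : ℝ} (hs0 : 0 < s) (hs1 : s < 1) {c : ℝ} (hc : 0 < c)
    (hhess : ∀ z ∈ Ω, ∀ u : (Fin (p + 1) → Fin n) → ℂ, IsCoeff u →
      c * (-(r z)) ^ s * nSq u ≤ (hForm (p + 1) (fun w => -((-(r w)) ^ s)) u z).re) :
    ∃ C > (0 : ℝ), ∀ u : (Fin (p + 1) → Fin n) → (Fin n → ℂ) → ℂ,
      (∀ z, IsCoeff (fun I => u I z)) → (∀ I, ContDiff ℝ ∞ (u I)) →
      (∀ I, HasCompactSupport (u I)) → (∀ I, tsupport (u I) ⊆ Ω) →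
      (∫ z in Ω, (-(r z)) ^ (s - 2) * ∑ J ∈ Incr n p,
          ‖∑ l : Fin n, dz (fun w => ((r w : ℝ) : ℂ)) l z * u (cons' (p + 1) l J) z‖ ^ 2)
        ≤ C * ((∫ z in Ω, (-(r z)) ^ s * dbarSq (p + 1) u z)
            + (∫ z in Ω, (-(r z)) ^ s * thetaSq (p + 1) u z)) := by
  have hsub : Ω ⊆ U := subset_closure.trans hcl
  have hfΩ : ∀ z ∈ Ω, ContDiffAt ℝ ∞ r z := fun z hz => hf z (hsub hz)
  obtain ⟨κ, hκ, hlow⟩ := hess_lower hΩo hΩb hU hcl hf hneg hgrad hs0 hs1 hc hhess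
  refine ⟨2 / κ * (1 + 2 * s ^ 2 / κ), by positivity, ?_⟩
  intro u hu hcd hcs hts
  set K : Set (Fin n → ℂ) := ⋃ I, tsupport (u I) with hKdef
  have hKc : IsCompact K := isCompact_iUnion fun I => hcs I
  have hKΩ : K ⊆ Ω := Set.iUnion_subset hts
  have hKn : ∀ z, z ∉ K → ∀ I, z ∉ tsupport (u I) := fun z hz I h => hz (Set.mem_iUnion.2 ⟨I, h⟩)
  have hpc : ∀ a : ℝ, ∀ z ∈ Ω, ContinuousAt (fun z => (-(r z)) ^ a) z := fun a z hz =>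
    (cd_pow (hfΩ z hz) (hneg z hz) a).continuousAt
  have i1 : IntegrableOn (fun z => (-(r z)) ^ (s - 2) * ∑ J ∈ Incr n p,
      ‖∑ l : Fin n, dz (fun w => ((r w : ℝ) : ℂ)) l z * u (cons' (p + 1) l J) z‖ ^ 2) Ω := by
    refine integrableOn_of hΩo hKc hKΩ (fun z hz => ?_) (fun z hz => ?_)
    · refine (hpc _ z hz).mul (tendsto_finsetSum _ fun J _ => ContinuousAt.pow (ContinuousAt.norm
        (tendsto_finsetSum _ fun l _ => ContinuousAt.mul ?_ ?_)) 2)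
      · exact (cd_dz (cd_ofReal (hfΩ z hz)) l).continuousAt
      · exact (hcd _).continuous.continuousAt
    · have : ∀ I, u I z = 0 := fun I => image_eq_zero_of_notMem_tsupport (hKn z hz I)
      simp [this]
  have i2 : IntegrableOn (fun z => (-(r z)) ^ s * dbarSq (p + 1) u z) Ω := by
    refine integrableOn_of hΩo hKc hKΩ (fun z hz => ?_) (fun z hz => ?_)
    · refine (hpc _ z hz).mul (tendsto_finsetSum _ fun J _ => ContinuousAt.pow (ContinuousAt.norm
        (tendsto_finsetSum _ fun l _ => tendsto_finsetSum _ fun I _ =>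
          ContinuousAt.mul continuousAt_const ?_)) 2)
      exact (cd_dzbar (hcd _).contDiffAt l).continuousAt
    · have : ∀ I k, dzbar (u I) k z = 0 := fun I k => (tsupport_dz _ k z (hKn z hz I)).2
      simp [dbarSq, dbarC, this]
  have i3 : IntegrableOn (fun z => (-(r z)) ^ s * thetaSq (p + 1) u z) Ω := by
    refine integrableOn_of hΩo hKc hKΩ (fun z hz => ?_) (fun z hz => ?_)
    · refine (hpc _ z hz).mul (tendsto_finsetSum _ fun J _ => ContinuousAt.pow (ContinuousAt.norm
        (ContinuousAt.neg (tendsto_finsetSum _ fun l _ => ?_))) 2)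
      exact (cd_dz (hcd _).contDiffAt l).continuousAt
    · have : ∀ I k, dz (u I) k z = 0 := fun I k => (tsupport_dz _ k z (hKn z hz I)).1
      simp [thetaSq, thetaC, this]
  have hD := fun (J : Fin p → Fin n) (k l : Fin n) =>
    Dv_int (Ω := Ω) (h := fun w => ((-((-(r w)) ^ s) : ℝ) : ℂ)) (v := fun j => u (cons' (p + 1) j J))
      (fun z hz => cd_F (hfΩ z hz) (hneg z hz) s) (fun k => hcd _) (fun k => hcs _)
      (fun k => hts _) k l
  have i4 : IntegrableOn (fun z => ∑ J ∈ Incr n p, ∑ k, ∑ l,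
      Dv (fun w => ((-((-(r w)) ^ s) : ℝ) : ℂ)) (fun j => u (cons' (p + 1) j J)) k l z) Ω :=
    integrable_finsetSum _ fun J _ => integrable_finsetSum _ fun k _ =>
      integrable_finsetSum _ fun l _ => (hD J k l).1
  have z4 : ∫ z in Ω, (∑ J ∈ Incr n p, ∑ k, ∑ l,
      Dv (fun w => ((-((-(r w)) ^ s) : ℝ) : ℂ)) (fun j => u (cons' (p + 1) j J)) k l z) = 0 := by
    rw [integral_finsetSum _ fun J _ => integrable_finsetSum _ fun k _ =>
      integrable_finsetSum _ fun l _ => (hD J k l).1]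
    refine Finset.sum_eq_zero fun J _ => ?_
    rw [integral_finsetSum _ fun k _ => integrable_finsetSum _ fun l _ => (hD J k l).1]
    refine Finset.sum_eq_zero fun k _ => ?_
    rw [integral_finsetSum _ fun l _ => (hD J k l).1]
    exact Finset.sum_eq_zero fun l _ => (hD J k l).2
  have i5 : IntegrableOn (fun z => (∑ J ∈ Incr n p, ∑ k, ∑ l,
      Dv (fun w => ((-((-(r w)) ^ s) : ℝ) : ℂ)) (fun j => u (cons' (p + 1) j J)) k l z).re) Ω := i4.re
  have z5 : ∫ z in Ω, (∑ J ∈ Incr n p, ∑ k, ∑ l,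
      Dv (fun w => ((-((-(r w)) ^ s) : ℝ) : ℂ)) (fun j => u (cons' (p + 1) j J)) k l z).re = 0 := by
    have := integral_re i4
    rw [z4] at this
    simpa using this
  have hpt : ∀ z ∈ Ω, κ / 2 * ((-(r z)) ^ (s - 2) * ∑ J ∈ Incr n p,
          ‖∑ l, dz (fun w => (r w : ℂ)) l z * u (cons' (p + 1) l J) z‖ ^ 2)
      ≤ (-(r z)) ^ s * dbarSq (p + 1) u z
        + (1 + 2 * s ^ 2 / κ) * ((-(r z)) ^ s * thetaSq (p + 1) u z)
        - (∑ J ∈ Incr n p, ∑ k, ∑ l, Dv (fun w => ((-((-(r w)) ^ s) : ℝ) : ℂ))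
            (fun j => u (cons' (p + 1) j J)) k l z).re := by
    intro z hz
    have hl := hlow z hz (fun I => u I z) (hu z)
    exact ptwise_final hfΩ hneg hs0 hκ hu hcd hz hl
  have hmono2 := int_combine hΩo.measurableSet i1 i2 i3 i5 (κ / 2) (1 + 2 * s ^ 2 / κ) z5 hpt
  have p2 : 0 ≤ ∫ z in Ω, (-(r z)) ^ s * dbarSq (p + 1) u z := by
    refine setIntegral_nonneg hΩo.measurableSet fun z hz => mul_nonneg
      (Real.rpow_nonneg (by linarith [hneg z hz]) _) (dbarSq_nonneg _ _)
  set A := ∫ z in Ω, (-(r z)) ^ (s - 2) * ∑ J ∈ Incr n p,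
          ‖∑ l : Fin n, dz (fun w => ((r w : ℝ) : ℂ)) l z * u (cons' (p + 1) l J) z‖ ^ 2
  set A2 := ∫ z in Ω, (-(r z)) ^ s * dbarSq (p + 1) u z
  set A3 := ∫ z in Ω, (-(r z)) ^ s * thetaSq (p + 1) u z
  have hM : 0 ≤ 2 * s ^ 2 / κ := by positivity
  have h1 : κ / 2 * A ≤ (1 + 2 * s ^ 2 / κ) * (A2 + A3) := by
    nlinarith [mul_nonneg hM p2]
  have h2 := mul_le_mul_of_nonneg_left h1 (show 0 ≤ 2 / κ by positivity)
  have h3 : 2 / κ * (κ / 2 * A) = A := by field_simp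
  rw [h3] at h2
  linarith

end HM


/-- the ∂̄-Hardy inequality (Proposition 3.3) for compactly supported
smooth (0,q)-forms. -/
theorem dbar_hardy_inequality (n q : ℕ) (hn : 1 ≤ n) (hq1 : 1 ≤ q) (hqn : q ≤ n)
    (Ω U : Set (Fin n → ℂ)) (hΩo : IsOpen Ω) (hΩb : Bornology.IsBounded Ω)
    (hU : IsOpen U) (hcl : closure Ω ⊆ U)
    (r : (Fin n → ℂ) → ℝ) (hr : ContDiffOn ℝ (⊤ : ℕ∞) r U)
    (hdef : Ω = {z | z ∈ U ∧ r z < 0})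
    (hgrad : ∀ z ∈ U, r z = 0 → fderiv ℝ r z ≠ 0)
    (s : ℝ) (hs : s ∈ Set.Ioo (0 : ℝ) 1)
    (c : ℝ) (hc : 0 < c)
    (hhess : ∀ z ∈ Ω, ∀ u : (Fin q → Fin n) → ℂ, HM.IsCoeff u →
      c * (-(r z)) ^ s * HM.nSq u ≤ (HM.hForm q (fun w => -((-(r w)) ^ s)) u z).re) :
    ∃ C > (0 : ℝ), ∀ u : (Fin q → Fin n) → (Fin n → ℂ) → ℂ,
      (∀ z, HM.IsCoeff (fun I => u I z)) → (∀ I, ContDiff ℝ (⊤ : ℕ∞) (u I)) →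
      (∀ I, HasCompactSupport (u I)) → (∀ I, tsupport (u I) ⊆ Ω) →
      (∫ z in Ω, (-(r z)) ^ (s - 2) * ∑ J ∈ HM.Incr n (q - 1),
          ‖∑ l : Fin n, HM.dz (fun w => ((r w : ℝ) : ℂ)) l z * u (HM.cons' q l J) z‖ ^ 2)
        ≤ C * ((∫ z in Ω, (-(r z)) ^ s * HM.dbarSq q u z)
            + (∫ z in Ω, (-(r z)) ^ s * HM.thetaSq q u z)) := by
  obtain ⟨p, rfl⟩ : ∃ p, q = p + 1 := ⟨q - 1, by omega⟩
  have hf : ∀ z ∈ U, ContDiffAt ℝ (⊤ : ℕ∞) r z := fun z hz => hr.contDiffAt (hU.mem_nhds hz)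
  have hneg : ∀ z ∈ Ω, r z < 0 := fun z hz => by
    rw [hdef] at hz
    exact hz.2
  exact HM.hardy_aux hΩo hΩb hU hcl hf hneg hgrad hs.1 hs.2 hc hhess
end

section
/- Let n ≥ 1, 1 ≤ j ≤ n, let H be an n×n complex matrix, a ∈ ℂⁿ, and φ a (0,j)-coefficient system on ℂⁿ. Define the (0,j)-coefficient system w by w_I := Σ_{m∈I} σ^{m(I∖m)}_I a_m for strictly increasing I of length j (extended antisymmetrically), and set v_J := Σ_{m=1}^n a_m φ_{mJ} for strictly increasing J of length j−1. Then |Σ'_{|J|=j−1} Σ_{k,l=1}^n H_{lk} φ_{lJ} a_k| ≤ |Σ'_{|J|=j−1} Σ_{k,l=1}^n H_{lk} φ_{lJ} w_{kJ}| + 2n²·(max_{k,l} |H_{lk}|)·Σ'_{|J|=j−1} |v_J|. -/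
open scoped BigOperators
open MeasureTheory

namespace HMaux
open HM Equiv

lemma mem_Incr {n q : ℕ} (I : Fin q → Fin n) : I ∈ Incr n q ↔ StrictMono I := by
  simp only [Incr, Finset.mem_filter, Finset.mem_univ, true_and, StrictMono]

lemma uniq_sort {n q : ℕ} (J : Fin q → Fin n) (σ τ : Perm (Fin q))
    (h1 : StrictMono (J ∘ σ)) (h2 : StrictMono (J ∘ τ)) : σ = τ := by
  have hr : Set.range (J ∘ σ) = Set.range (J ∘ τ) := by
    rw [Set.range_comp, Set.range_comp, σ.surjective.range_eq, τ.surjective.range_eq]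
  have h := (StrictMono.range_inj h1 h2).1 hr
  have hJ : Function.Injective J := by
    have := h1.injective
    have h3 := this.comp σ.symm.injective
    simpa [Function.comp_assoc] using h3
  ext x
  have := congrFun h x
  exact congrArg Fin.val (hJ this)

lemma exists_sort {n q : ℕ} (J : Fin q → Fin n) (hJ : Function.Injective J) :
    ∃ σ : Perm (Fin q), StrictMono (J ∘ σ) :=
  ⟨Tuple.sort J, (Tuple.monotone_sort J).strictMono_of_injective
    (hJ.comp (Tuple.sort J).injective)⟩

lemma coeff_zero {n q : ℕ} {u : (Fin q → Fin n) → ℂ} (hu : IsCoeff u) (I : Fin q → Fin n)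
    (hI : ¬ Function.Injective I) : u I = 0 := by
  simp only [Function.Injective, not_forall] at hI
  obtain ⟨x, y, hxy, hne⟩ := hI
  have h := hu (swap x y) I
  have h2 : I ∘ (swap x y) = I := by
    funext z
    simp only [Function.comp]
    by_cases hx : z = x
    · subst hx; simp [hxy]
    by_cases hy : z = y
    · subst hy; simp [hxy]
    rw [swap_apply_of_ne_of_ne hx hy]
  rw [h2, Perm.sign_swap hne] at h
  simp at h
  have : (2:ℂ) * u I = 0 := by linear_combination h
  simpa using this

lemma coeff_ext {n q : ℕ} {u v : (Fin q → Fin n) → ℂ} (hu : IsCoeff u) (hv : IsCoeff v)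
    (h : ∀ I ∈ Incr n q, u I = v I) : u = v := by
  funext I
  by_cases hI : Function.Injective I
  · obtain ⟨σ, hσ⟩ := exists_sort I hI
    have h1 := h _ ((mem_Incr _).2 hσ)
    rw [hu, hv] at h1
    refine mul_left_cancel₀ ?_ h1
    rcases Int.units_eq_one_or (Perm.sign σ) with h | h <;> simp [h]
  · rw [coeff_zero hu I hI, coeff_zero hv I hI]

open Classical in
lemma sum_symm {n q : ℕ} {R : Type*} [CommRing R] (F : (Fin q → Fin n) → R)
    (hs : ∀ (σ : Perm (Fin q)) J, F (J ∘ σ) = F J)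
    (h0 : ∀ J, ¬ Function.Injective J → F J = 0) :
    ∑ J, F J = (q.factorial : R) * ∑ J ∈ Incr n q, F J := by
  have h1 : ∀ J, F J = ∑ σ : Perm (Fin q), if StrictMono (J ∘ σ) then F (J ∘ σ) else 0 := by
    intro J
    by_cases hJ : Function.Injective J
    · obtain ⟨σ, hσ⟩ := exists_sort J hJ
      rw [Finset.sum_eq_single σ]
      · rw [if_pos hσ, hs]
      · intro τ _ hne
        rw [if_neg]
        exact fun hτ => hne (uniq_sort J τ σ hτ hσ)
      · simp
    · rw [h0 J hJ]
      symm
      apply Finset.sum_eq_zero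
      intro σ _
      rw [hs, h0 J hJ, ite_self]
  rw [Finset.sum_congr rfl (fun J _ => h1 J), Finset.sum_comm]
  have h2 : ∀ σ : Perm (Fin q), (∑ J : Fin q → Fin n, if StrictMono (J ∘ σ) then F (J ∘ σ) else 0)
      = ∑ J ∈ Incr n q, F J := by
    intro σ
    rw [← (Equiv.arrowCongr σ (Equiv.refl (Fin n))).sum_comp]
    have : Incr n q = Finset.univ.filter (fun J => StrictMono J) := by
      ext J; simp [mem_Incr]
    rw [this, Finset.sum_filter]
    refine Finset.sum_congr rfl fun J _ => ?_
    have : (Equiv.arrowCongr σ (Equiv.refl (Fin n))) J ∘ σ = J := by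
      funext x; simp
    rw [this]
  rw [Finset.sum_congr rfl (fun σ _ => h2 σ)]
  simp [Fintype.card_perm]

open Classical in
noncomputable def theta {n q : ℕ} (J : Fin q → Fin n) : ℂ :=
  ∑ σ : Perm (Fin q), if StrictMono (J ∘ σ) then ((Perm.sign σ : ℤ) : ℂ) else 0

lemma theta_coeff {n q : ℕ} : IsCoeff (theta (n := n) (q := q)) := by
  classical
  intro τ J
  unfold theta
  rw [Finset.mul_sum, ← Equiv.sum_comp (Equiv.mulLeft τ) (fun σ : Perm (Fin q) =>
    ((Perm.sign τ : ℤ) : ℂ) * if StrictMono (J ∘ σ) then ((Perm.sign σ : ℤ) : ℂ) else 0)]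
  refine Finset.sum_congr rfl fun σ _ => ?_
  have : (J ∘ τ) ∘ σ = J ∘ (Equiv.mulLeft τ σ) := by
    funext x; simp
  rw [this]
  split_ifs
  · rcases Int.units_eq_one_or (Perm.sign τ) with h | h <;> simp [h]
  · simp

lemma theta_mono {n q : ℕ} (J : Fin q → Fin n) (hJ : StrictMono J) : theta J = 1 := by
  classical
  unfold theta
  rw [Finset.sum_eq_single 1]
  · simp [hJ]
  · intro τ _ hne
    rw [if_neg]
    exact fun hτ => hne (uniq_sort J τ 1 hτ hJ)
  · simp

lemma theta_norm {n q : ℕ} (J : Fin q → Fin n) : ‖theta J‖ ≤ 1 := by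
  by_cases hJ : Function.Injective J
  · obtain ⟨σ, hσ⟩ := exists_sort J hJ
    have h := theta_coeff σ J
    rw [theta_mono _ hσ] at h
    rcases Int.units_eq_one_or (Perm.sign σ) with h' | h'
    · rw [h'] at h; simp at h; rw [← h]; simp
    · rw [h'] at h; simp at h
      have : theta J = -1 := by linear_combination h
      rw [this]; simp
  · rw [coeff_zero theta_coeff J hJ]; simp

noncomputable def W {n q : ℕ} (a : Fin n → ℂ) (I : Fin (q+1) → Fin n) : ℂ :=
  ∑ p : Fin (q+1), (if p = 0 then 1 else -1) * a (I p) * theta (Fin.tail (I ∘ swap 0 p))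

lemma W_eq {n q : ℕ} (a : Fin n → ℂ) (I : Fin (q+1) → Fin n) :
    (q.factorial : ℂ) * W a I =
      ∑ σ : Perm (Fin (q+1)), ((Perm.sign σ : ℤ) : ℂ) * (a (I (σ 0)) * theta (Fin.tail (I ∘ σ))) := by
  rw [← Perm.decomposeFin.symm.sum_comp, Fintype.sum_prod_type, W, Finset.mul_sum]
  refine Finset.sum_congr rfl fun p _ => ?_
  have : ∀ e : Perm (Fin q), ((Perm.sign (Perm.decomposeFin.symm (p, e)) : ℤ) : ℂ) *
      (a (I (Perm.decomposeFin.symm (p, e) 0)) *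
        theta (Fin.tail (I ∘ Perm.decomposeFin.symm (p, e)))) =
      (if p = 0 then 1 else -1) * a (I p) * theta (Fin.tail (I ∘ swap 0 p)) := by
    intro e
    have h1 : Fin.tail (I ∘ Perm.decomposeFin.symm (p, e)) = Fin.tail (I ∘ swap 0 p) ∘ e := by
      funext x
      simp [Fin.tail]
    rw [h1, theta_coeff, Perm.decomposeFin.symm_sign]
    rcases Int.units_eq_one_or (Perm.sign e) with h | h <;> by_cases hp : p = 0 <;> simp [h, hp]
  rw [Finset.sum_congr rfl (fun e _ => this e)]
  simp [Fintype.card_perm]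

lemma W_coeff {n q : ℕ} (a : Fin n → ℂ) : IsCoeff (W (q := q) a) := by
  intro τ I
  have hq : (q.factorial : ℂ) ≠ 0 := by exact_mod_cast q.factorial_ne_zero
  apply mul_left_cancel₀ hq
  rw [mul_left_comm, W_eq, W_eq, Finset.mul_sum, ← Equiv.sum_comp (Equiv.mulLeft τ) (fun σ : Perm (Fin (q+1)) =>
    ((Perm.sign τ : ℤ) : ℂ) * (((Perm.sign σ : ℤ) : ℂ) *
      (a (I (σ 0)) * theta (Fin.tail (I ∘ σ)))))]
  refine Finset.sum_congr rfl fun σ _ => ?_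
  have : (I ∘ τ) ∘ σ = I ∘ (Equiv.mulLeft τ σ) := by
    funext x; simp
  rw [this]
  rcases Int.units_eq_one_or (Perm.sign τ) with h | h <;> simp [h]

lemma cons'_eq {n q : ℕ} (k : Fin n) (J : Fin q → Fin n) :
    cons' (q+1) k J = (Fin.cons k J : Fin (q+1) → Fin n) := by
  funext i
  refine Fin.cases ?_ (fun i => ?_) i
  · simp [cons']
  · simp [cons']

lemma removeIdx_eq {n q : ℕ} (I : Fin (q+1) → Fin n) (i : Fin (q+1)) :
    removeIdx I i = I ∘ i.succAbove := by
  funext t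
  simp only [removeIdx, Function.comp, Fin.succAbove, Fin.lt_def, Fin.val_castSucc]
  split_ifs <;> rfl

lemma permSign_eq {n p : ℕ} (I : Fin p → Fin n) (hI : Function.Injective I) (ρ : Perm (Fin p)) :
    permSign (I ∘ ρ) I = (Perm.sign ρ : ℤ) := by
  unfold permSign
  rw [if_pos (hI.comp ρ.injective), Finset.sum_eq_single ρ⁻¹]
  · rw [if_pos]
    · simp
    · funext x; simp
  · intro τ _ hne
    rw [if_neg]
    intro h
    apply hne
    ext x
    have := congrFun h x
    have := hI this
    rw [show τ x = ρ⁻¹ x by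
      rw [Perm.eq_inv_iff_eq]; exact this.symm]
  · simp

lemma W_incr {n q : ℕ} (a : Fin n → ℂ) (I : Fin (q+1) → Fin n) (hI : StrictMono I) :
    W a I = ∑ i : Fin (q+1),
      ((permSign (cons' (q+1) (I i) (removeIdx I i)) I : ℤ) : ℂ) * a (I i) := by
  unfold W
  refine Finset.sum_congr rfl fun p _ => ?_
  have h1 : cons' (q+1) (I p) (removeIdx I p) = I ∘ p.cycleRange.symm := by
    rw [removeIdx_eq]
    refine (cons'_eq _ _).trans ?_
    funext x
    refine Fin.cases ?_ (fun i => ?_) x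
    · simp
    · simp
  rw [h1, permSign_eq I hI.injective]
  obtain ⟨⟨p', e⟩, he⟩ := Perm.decomposeFin.symm.surjective p.cycleRange.symm
  have hp : p' = p := by
    have := congrArg (fun σ : Perm (Fin (q+1)) => σ 0) he
    simpa using this
  subst hp
  have h2 : Fin.tail (I ∘ swap 0 p') ∘ e = I ∘ p'.succAbove := by
    funext x
    have := congrArg (fun σ : Perm (Fin (q+1)) => σ x.succ) he
    simp at this
    simp [Fin.tail, this]
  have h3 := theta_coeff e (Fin.tail (I ∘ swap 0 p'))
  rw [h2, theta_mono _ (hI.comp (Fin.strictMono_succAbove p'))] at h3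
  rw [← he, Perm.decomposeFin.symm_sign]
  rcases Int.units_eq_one_or (Perm.sign e) with h | h
  · rw [h] at h3 ⊢
    simp at h3
    rw [← h3]
    by_cases hp : p' = 0 <;> simp [hp]
  · rw [h] at h3 ⊢
    have : theta (Fin.tail (I ∘ swap 0 p')) = -1 := by
      push_cast at h3
      linear_combination h3
    rw [this]
    by_cases hp : p' = 0 <;> simp [hp]

lemma W_cons {n q : ℕ} (a : Fin n → ℂ) (k : Fin n) (J : Fin q → Fin n) :
    W a (Fin.cons k J : Fin (q+1) → Fin n) =
      a k * theta J - ∑ i, a (J i) * theta (Function.update J i k) := by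
  unfold W
  rw [Fin.sum_univ_succ, sub_eq_add_neg, ← Finset.sum_neg_distrib]
  congr 1
  · have : Fin.tail ((Fin.cons k J : Fin (q+1) → Fin n) ∘ swap 0 0) = J := by
      funext x; simp [Fin.tail]
    rw [this]; simp
  · refine Finset.sum_congr rfl fun i _ => ?_
    have : Fin.tail ((Fin.cons k J : Fin (q+1) → Fin n) ∘ swap 0 i.succ)
        = Function.update J i k := by
      funext x
      by_cases hx : x = i
      · subst hx; simp [Fin.tail]
      · have : x.succ ≠ i.succ := fun h => hx (Fin.succ_injective _ h)
        simp [Fin.tail, hx, swap_apply_of_ne_of_ne (Fin.succ_ne_zero x) this]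
    rw [this]; simp

lemma cons_comp {n q : ℕ} (l : Fin n) (J : Fin q → Fin n) (σ : Perm (Fin q)) :
    (Fin.cons l (J ∘ σ) : Fin (q+1) → Fin n) =
      (Fin.cons l J : Fin (q+1) → Fin n) ∘ Perm.decomposeFin.symm (0, σ) := by
  funext x
  refine Fin.cases ?_ (fun i => ?_) x <;> simp

lemma coeff_cons {n q : ℕ} {φ : (Fin (q+1) → Fin n) → ℂ} (hφ : IsCoeff φ) (l : Fin n) :
    IsCoeff (fun J : Fin q → Fin n => φ (Fin.cons l J)) := by
  intro σ J
  simp only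
  rw [cons_comp, hφ, Perm.decomposeFin.symm_sign]
  simp

noncomputable def v {n q : ℕ} (a : Fin n → ℂ) (φ : (Fin (q+1) → Fin n) → ℂ)
    (J : Fin q → Fin n) : ℂ := ∑ m, a m * φ (Fin.cons m J)

lemma v_coeff {n q : ℕ} (a : Fin n → ℂ) {φ : (Fin (q+1) → Fin n) → ℂ} (hφ : IsCoeff φ) :
    IsCoeff (v a φ) := by
  intro σ J
  unfold v
  rw [Finset.mul_sum]
  refine Finset.sum_congr rfl fun m _ => ?_
  have := coeff_cons hφ m σ J
  simp only at this
  rw [this]; ring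

lemma term_bound {n r : ℕ} (a : Fin n → ℂ) {φ : (Fin (r+1+1) → Fin n) → ℂ} (hφ : IsCoeff φ)
    (k l : Fin n) (i : Fin (r+1)) :
    ‖∑ J : Fin (r+1) → Fin n, φ (Fin.cons l J) * (a (J i) * theta (Function.update J i k))‖ ≤
      ∑ J : Fin (r+1) → Fin n, if J i = l then ‖v a φ J‖ else 0 := by
  rw [← (Fin.insertNthEquiv (fun _ => Fin n) i).sum_comp,
    ← (Fin.insertNthEquiv (fun _ => Fin n) i).sum_comp, Fintype.sum_prod_type_right,
    Fintype.sum_prod_type_right]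
  refine (norm_sum_le _ _).trans (Finset.sum_le_sum fun K _ => ?_)
  simp only [Fin.insertNthEquiv_apply, Fin.insertNth_apply_same]
  have h1 : ∀ m : Fin n, φ (Fin.cons l (i.insertNth m K : Fin (r+1) → Fin n)) =
      - φ (Fin.cons m (i.insertNth l K : Fin (r+1) → Fin n)) := by
    intro m
    have := hφ (swap 0 i.succ) (Fin.cons m (i.insertNth l K : Fin (r+1) → Fin n))
    rw [Perm.sign_swap (Fin.succ_ne_zero i).symm] at this
    rw [show (-φ (Fin.cons m (i.insertNth l K : Fin (r+1) → Fin n))) =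
      (((-1 : ℤˣ) : ℤ) : ℂ) * φ (Fin.cons m (i.insertNth l K : Fin (r+1) → Fin n)) by simp, ← this]
    congr 1
    funext x
    refine Fin.cases ?_ (fun x => ?_) x
    · simp
    · by_cases hx : x = i
      · subst hx; simp
      · have h2 : x.succ ≠ i.succ := fun h => hx (Fin.succ_injective _ h)
        obtain ⟨y, rfl⟩ := Fin.exists_succAbove_eq hx
        simp [swap_apply_of_ne_of_ne (Fin.succ_ne_zero _) h2]
  have h2 : ∑ m, φ (Fin.cons l (i.insertNth m K : Fin (r+1) → Fin n)) *
      (a m * theta (i.insertNth k K : Fin (r+1) → Fin n)) =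
      - (v a φ (i.insertNth l K : Fin (r+1) → Fin n) *
        theta (i.insertNth k K : Fin (r+1) → Fin n)) := by
    unfold v
    rw [Finset.sum_mul, ← Finset.sum_neg_distrib]
    refine Finset.sum_congr rfl fun m _ => ?_
    rw [h1]; ring
  have h3 : ∀ m : Fin n, (Fin.insertNthEquiv (fun _ => Fin n) i) (m, K) =
      (i.insertNth m K : Fin (r+1) → Fin n) := fun m => rfl
  have h4 : ∀ m : Fin n, Function.update (i.insertNth m K : Fin (r+1) → Fin n) i k =
      (i.insertNth k K : Fin (r+1) → Fin n) := fun m => by simp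
  simp only [h3, h4]
  rw [h2, norm_neg, norm_mul]
  rw [Finset.sum_ite_eq' Finset.univ l]
  simp only [Finset.mem_univ, if_true]
  exact mul_le_of_le_one_right (norm_nonneg _) (theta_norm _)

lemma kl_bound {n q : ℕ} (a : Fin n → ℂ) {φ : (Fin (q+1) → Fin n) → ℂ} (hφ : IsCoeff φ)
    (k l : Fin n) :
    ‖∑ J ∈ Incr n q, φ (Fin.cons l J) * ∑ i, a (J i) * theta (Function.update J i k)‖ ≤
      ∑ J ∈ Incr n q, ‖v a φ J‖ := by
  have hq : (0:ℝ) < (q.factorial : ℝ) := by exact_mod_cast q.factorial_pos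
  have sq : ∀ σ : Perm (Fin q), ((Perm.sign σ : ℤ) : ℂ) * ((Perm.sign σ : ℤ) : ℂ) = 1 := by
    intro σ
    rcases Int.units_eq_one_or (Perm.sign σ) with h | h <;> simp [h]
  have hG := sum_symm (fun J : Fin q → Fin n =>
      φ (Fin.cons l J) * ∑ i, a (J i) * theta (Function.update J i k)) (by
    intro σ J
    have h1 := coeff_cons hφ l σ J
    simp only at h1 ⊢
    rw [h1]
    have h2 : ∑ i, a ((J ∘ σ) i) * theta (Function.update (J ∘ σ) i k) =
        ((Perm.sign σ : ℤ) : ℂ) * ∑ i, a (J i) * theta (Function.update J i k) := by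
      rw [Finset.mul_sum, ← Equiv.sum_comp σ (fun i => ((Perm.sign σ : ℤ) : ℂ) *
        (a (J i) * theta (Function.update J i k)))]
      refine Finset.sum_congr rfl fun i _ => ?_
      have : Function.update (J ∘ σ) i k = Function.update J (σ i) k ∘ σ := by
        funext x
        by_cases hx : x = i
        · subst hx; simp
        · simp [hx]
      rw [this, theta_coeff, Function.comp]; ring
    rw [h2]
    linear_combination (φ (Fin.cons l J) * ∑ i, a (J i) * theta (Function.update J i k)) * sq σ)
    (by
      intro J hJ
      have := coeff_zero (coeff_cons hφ l) J hJ
      beta_reduce at this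
      rw [this, zero_mul])
  have hV := sum_symm (fun J : Fin q → Fin n => ‖v a φ J‖) (by
    intro σ J
    rw [v_coeff a hφ]
    rcases Int.units_eq_one_or (Perm.sign σ) with h | h <;> simp [h]) (by
    intro J hJ
    rw [coeff_zero (v_coeff a hφ) J hJ, norm_zero])
  rw [← mul_le_mul_iff_right₀ hq, ← hV]
  have : ∀ z : ℂ, (q.factorial : ℝ) * ‖z‖ = ‖(q.factorial : ℂ) * z‖ := by
    intro z; simp
  rw [this, ← hG]
  simp only [Finset.mul_sum]
  rw [Finset.sum_comm]
  calc _ ≤ ∑ i : Fin q, ∑ J : Fin q → Fin n, (if J i = l then ‖v a φ J‖ else 0) := by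
        refine (norm_sum_le _ _).trans (Finset.sum_le_sum fun i _ => ?_)
        cases q with
        | zero => exact i.elim0
        | succ r => exact term_bound a hφ k l i
    _ ≤ _ := by
        rw [Finset.sum_comm]
        refine Finset.sum_le_sum fun J _ => ?_
        by_cases hJ : Function.Injective J
        · by_cases hl : ∃ i, J i = l
          · obtain ⟨i, hi⟩ := hl
            rw [Finset.sum_eq_single i]
            · rw [if_pos hi]
            · intro b _ hb
              rw [if_neg]
              exact fun h => hb (hJ (h.trans hi.symm))
            · simp
          · push Not at hl
            simp [hl]
        · rw [coeff_zero (v_coeff a hφ) J hJ]; simp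

lemma main {n q : ℕ} (H : Matrix (Fin n) (Fin n) ℂ) (a : Fin n → ℂ)
    {φ : (Fin (q+1) → Fin n) → ℂ} (hφ : IsCoeff φ) :
    ‖∑ J ∈ Incr n q, ∑ k : Fin n, ∑ l : Fin n, H l k * φ (Fin.cons l J) * a k‖ ≤
      ‖∑ J ∈ Incr n q, ∑ k : Fin n, ∑ l : Fin n,
          H l k * φ (Fin.cons l J) * W a (Fin.cons k J : Fin (q+1) → Fin n)‖ +
        2 * n ^ 2 * (⨆ k : Fin n, ⨆ l : Fin n, ‖H l k‖) * ∑ J ∈ Incr n q, ‖v a φ J‖ := by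
  set M := (⨆ k : Fin n, ⨆ l : Fin n, ‖H l k‖) with hM
  set V := ∑ J ∈ Incr n q, ‖v a φ J‖ with hV
  have hV0 : 0 ≤ V := Finset.sum_nonneg fun _ _ => norm_nonneg _
  have hM0 : 0 ≤ M := Real.iSup_nonneg fun k => Real.iSup_nonneg fun l => norm_nonneg _
  have hle : ∀ k l, ‖H l k‖ ≤ M := fun k l =>
    (le_ciSup (f := fun l => ‖H l k‖) (Set.finite_range _).bddAbove l).trans
      (le_ciSup (f := fun k => ⨆ l, ‖H l k‖) (Set.finite_range _).bddAbove k)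
  have heq : ∑ J ∈ Incr n q, ∑ k : Fin n, ∑ l : Fin n, H l k * φ (Fin.cons l J) * a k =
      ∑ J ∈ Incr n q, ∑ k : Fin n, ∑ l : Fin n,
          H l k * φ (Fin.cons l J) * W a (Fin.cons k J : Fin (q+1) → Fin n) +
      ∑ k : Fin n, ∑ l : Fin n, H l k * ∑ J ∈ Incr n q, φ (Fin.cons l J) *
        ∑ i, a (J i) * theta (Function.update J i k) := by
    have : ∑ k : Fin n, ∑ l : Fin n, H l k * ∑ J ∈ Incr n q, φ (Fin.cons l J) *
        ∑ i, a (J i) * theta (Function.update J i k) =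
        ∑ J ∈ Incr n q, ∑ k : Fin n, ∑ l : Fin n, H l k * (φ (Fin.cons l J) *
        ∑ i, a (J i) * theta (Function.update J i k)) := by
      symm
      rw [Finset.sum_comm]
      refine Finset.sum_congr rfl fun k _ => ?_
      rw [Finset.sum_comm]
      refine Finset.sum_congr rfl fun l _ => ?_
      rw [Finset.mul_sum]
    rw [this, ← Finset.sum_add_distrib]
    refine Finset.sum_congr rfl fun J hJ => ?_
    rw [← Finset.sum_add_distrib]
    refine Finset.sum_congr rfl fun k _ => ?_
    rw [← Finset.sum_add_distrib]
    refine Finset.sum_congr rfl fun l _ => ?_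
    rw [W_cons, theta_mono J ((mem_Incr J).1 hJ)]
    ring
  rw [heq]
  refine (norm_add_le _ _).trans (add_le_add le_rfl ?_)
  calc _ ≤ ∑ k : Fin n, ∑ l : Fin n, M * V := by
        refine (norm_sum_le _ _).trans (Finset.sum_le_sum fun k _ => ?_)
        refine (norm_sum_le _ _).trans (Finset.sum_le_sum fun l _ => ?_)
        rw [norm_mul]
        exact mul_le_mul (hle k l) (kl_bound a hφ k l) (norm_nonneg _) hM0
    _ ≤ _ := by
        simp only [Finset.sum_const, Finset.card_univ, Fintype.card_fin, nsmul_eq_mul]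
        have : 0 ≤ (n:ℝ)^2 * (M * V) := by positivity
        nlinarith

end HMaux

/-- the estimate of Lemma 4.3: passing from `a` to the form `w = ∂̄(r Σ' dz̄^J)`
costs at most `2n²·max|H|·Σ'|v_J|`. -/
theorem hessian_pairing_estimate (n j : ℕ) (hn : 1 ≤ n) (hj1 : 1 ≤ j) (hjn : j ≤ n)
    (H : Matrix (Fin n) (Fin n) ℂ) (a : Fin n → ℂ)
    (φ : (Fin j → Fin n) → ℂ) (hφ : HM.IsCoeff φ)
    (w : (Fin j → Fin n) → ℂ) (hw : HM.IsCoeff w)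
    (hwdef : ∀ I ∈ HM.Incr n j, w I = ∑ i : Fin j,
      ((HM.permSign (HM.cons' j (I i) (HM.removeIdx I i)) I : ℤ) : ℂ) * a (I i)) :
    ‖∑ J ∈ HM.Incr n (j - 1), ∑ k : Fin n, ∑ l : Fin n,
        H l k * φ (HM.cons' j l J) * a k‖ ≤
      ‖∑ J ∈ HM.Incr n (j - 1), ∑ k : Fin n, ∑ l : Fin n,
          H l k * φ (HM.cons' j l J) * w (HM.cons' j k J)‖ +
        2 * n ^ 2 * (⨆ k : Fin n, ⨆ l : Fin n, ‖H l k‖) *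
          ∑ J ∈ HM.Incr n (j - 1), ‖∑ m : Fin n, a m * φ (HM.cons' j m J)‖ := by
  classical
  obtain ⟨q, rfl⟩ : ∃ q, j = q + 1 := ⟨j - 1, by omega⟩
  have hwW : w = HMaux.W a := HMaux.coeff_ext hw (HMaux.W_coeff a) fun I hI => by
    rw [hwdef I hI, HMaux.W_incr a I ((HMaux.mem_Incr I).1 hI)]
  have h := HMaux.main H a hφ
  simp only [← HMaux.cons'_eq, HMaux.v] at h
  rw [hwW]
  exact h
end
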